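/- arXiv:1606.03499 — 2 statements merged into one kernel-verified Lean document; each statement's English description precedes it below -/
import Mathlib

section
/- Let n ≥ 3 and let (ψ_j)_{j∈ℕ} be a sequence of smooth ℤⁿ-periodic real-valued eigenfunctions of the Euclidean Laplacian on ℝⁿ with eigenvalues λ_j → ∞, whose restrictions to the fundamental domain [0,1)ⁿ form an orthonormal basis of L²([0,1)ⁿ). For every ε > 0 there exist a constant a₁ > 0 (depending only on n and ε) and a subset S_ε ⊆ ℕ of full density such that for every j ∈ S_ε, every nodal domain Ω of ψ_j satisfies in(Ω) ≥ a₁ λ_j^{-1/2-(n-2)²/(4n)-ε}. -/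
open MeasureTheory Metric Filter Real

noncomputable section

/-- `ψ : ℝⁿ → ℝ` is `ℤⁿ`-periodic: `ψ (x + v) = ψ x` for every integer vector `v`. -/
def ZnPeriodic (n : ℕ) (ψ : EuclideanSpace ℝ (Fin n) → ℝ) : Prop :=
  ∀ (x : EuclideanSpace ℝ (Fin n)) (v : Fin n → ℤ),
    ψ (show EuclideanSpace ℝ (Fin n) from WithLp.toLp 2 fun i => x i + (v i : ℝ)) = ψ x

/-- The Euclidean Laplacian `Δψ = ∑ᵢ ∂²ψ/∂xᵢ²`. -/
def lap (n : ℕ) (ψ : EuclideanSpace ℝ (Fin n) → ℝ) (x : EuclideanSpace ℝ (Fin n)) : ℝ :=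
  ∑ i : Fin n,
    fderiv ℝ (fun y => fderiv ℝ ψ y (EuclideanSpace.single i (1:ℝ))) x
      (EuclideanSpace.single i (1:ℝ))

/-- `Ω` is a nodal domain of `ψ`: a connected component of `{ψ ≠ 0}`. -/
def IsNodalDomain {n : ℕ} (ψ : EuclideanSpace ℝ (Fin n) → ℝ)
    (Ω : Set (EuclideanSpace ℝ (Fin n))) : Prop :=
  ∃ x, ψ x ≠ 0 ∧ Ω = connectedComponentIn {y | ψ y ≠ 0} x

/-- The inner radius of a set: the supremum of radii of open balls contained in it. -/
def innerRadius {n : ℕ} (Ω : Set (EuclideanSpace ℝ (Fin n))) : ℝ :=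
  sSup {ρ : ℝ | 0 < ρ ∧ ∃ c, Metric.ball c ρ ⊆ Ω}

/-- The fundamental domain `[0,1)ⁿ` of the torus `ℝⁿ/ℤⁿ`. -/
def fundDom (n : ℕ) : Set (EuclideanSpace ℝ (Fin n)) :=
  {x | ∀ i, x i ∈ Set.Ico (0:ℝ) 1}

/-- `S ⊆ ℕ` has full density: `#(S ∩ [1,N]) / N → 1`. -/
def FullDensity (S : Set ℕ) : Prop :=
  Filter.Tendsto (fun N => (Nat.card ↥(S ∩ Set.Icc 1 N) : ℝ) / N) Filter.atTop (nhds 1)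

/- Normalise an eigenfunction `u` so that `u x₀ = 1` is the maximum of `|u|` over the nodal domain.
A cutoff of `u` restricted to that nodal domain is almost subharmonic and maximal at `x₀`, so
`{1 < |u|}` occupies at most a fraction `C * lam * R ^ 2` of the ball of radius `R` around `x₀`.
Hence a typical ray from a point `x` near `x₀` carries many equally spaced points with `|u| ≤ 1`,
and since the derivatives of `u` along rays grow no faster than those of an analytic function,
polynomial interpolation at these points bounds `u x`. The first application of this bounds
`log |u|` globally by `O(lam ^ 2)`, using periodicity. Each further one, on a ball of half the
radius, divides the bound on `log |u|` by `L = (C * lam) ^ δ`; finitely many steps give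
`|u| = O(L ^ 2)` on a ball of radius `lam ^ (-1 / 2)` up to powers of `L`, and the gradient bound
keeps `u` positive on a ball smaller by another factor `L ^ 2`. -/

section Interpolation

theorem exists_iteratedDeriv_eq_zero {k : ℕ} {f : ℝ → ℝ} (hf : ContDiff ℝ k f) {I : Set ℝ}
    [I.OrdConnected] {s : Finset ℝ} (hs : s.card = k + 1) (hsI : ∀ x ∈ s, x ∈ I)
    (hfs : ∀ x ∈ s, f x = 0) : ∃ ξ ∈ I, iteratedDeriv k f ξ = 0 := by
  induction k generalizing f s with
  | zero =>
    obtain ⟨x, hx⟩ := Finset.card_pos.mp (by lia : 0 < s.card)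
    exact ⟨x, hsI x hx, by simpa using hfs x hx⟩
  | succ k ih =>
    let e := s.orderEmbOfFin hs
    have he (i) : e i ∈ s := s.orderEmbOfFin_mem hs i
    have rolle (i : Fin (k + 1)) : ∃ c ∈ Set.Ioo (e i.castSucc) (e i.succ), deriv f c = 0 :=
      exists_deriv_eq_zero (e.strictMono Fin.castSucc_lt_succ) hf.continuous.continuousOn
        ((hfs _ (he _)).trans (hfs _ (he _)).symm)
    choose c hc hc0 using rolle
    have hmono : StrictMono c := Fin.strictMono_iff_lt_succ.2 fun i ↦
      (hc i.castSucc).2.trans (Fin.succ_castSucc i ▸ (hc i.succ).1)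
    have hcI (i) : c i ∈ I :=
      Set.Icc_subset I (hsI _ (he _)) (hsI _ (he _)) (Set.Ioo_subset_Icc_self (hc i))
    obtain ⟨ξ, hξ, hξ0⟩ := ih (f := deriv f) (s := Finset.univ.image c)
      (contDiff_succ_iff_deriv.1 (by exact_mod_cast hf)).2.2
      (by simp [Finset.card_image_of_injective _ hmono.injective])
      (by simpa using hcI) (by simpa using hc0)
    exact ⟨ξ, hξ, by rw [iteratedDeriv_succ', hξ0]⟩

theorem iteratedDeriv_polynomial_eval (k : ℕ) (Q : Polynomial ℝ) (x : ℝ) :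
    iteratedDeriv k (fun y ↦ Q.eval y) x = (Polynomial.derivative^[k] Q).eval x := by
  induction k generalizing Q with
  | zero => simp
  | succ k ih =>
    rw [iteratedDeriv_succ', Function.iterate_succ_apply, ← ih]
    congr 1
    ext y; simp

theorem iterate_derivative_nodal {ι : Type*} (s : Finset ι) (v : ι → ℝ) :
    Polynomial.derivative^[s.card] (Lagrange.nodal s v) =
      Polynomial.C (s.card.factorial : ℝ) := by
  have hdeg : (Lagrange.nodal s v).natDegree = s.card := Lagrange.natDegree_nodal
  have hconst : (Polynomial.derivative^[s.card] (Lagrange.nodal s v)).natDegree = 0 := by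
    have := Polynomial.natDegree_iterate_derivative (Lagrange.nodal s v) s.card
    lia
  have hlead : (Lagrange.nodal s v).coeff s.card = 1 := by
    rw [← hdeg]; exact Lagrange.nodal_monic.coeff_natDegree
  rw [Polynomial.eq_C_of_natDegree_eq_zero hconst, Polynomial.coeff_iterate_derivative]
  simp [hlead, Nat.descFactorial_self]

/- The error vanishes at the nodes; subtracting the multiple of the nodal polynomial that makes it
vanish at `x` too gives `s.card + 1` zeros. -/
theorem exists_sub_eval_interpolate_eq {ι : Type*} [DecidableEq ι] {s : Finset ι} {v : ι → ℝ}
    (hv : Set.InjOn v s) {f : ℝ → ℝ} (hf : ContDiff ℝ s.card f) {I : Set ℝ} [I.OrdConnected]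
    (hvI : ∀ i ∈ s, v i ∈ I) {x : ℝ} (hx : x ∈ I) :
    ∃ ξ ∈ I, f x - (Lagrange.interpolate s v (fun i ↦ f (v i))).eval x =
      iteratedDeriv s.card f ξ / s.card.factorial * (Lagrange.nodal s v).eval x := by
  set P := Lagrange.interpolate s v (fun i ↦ f (v i))
  set N := Lagrange.nodal s v
  have hP : ∀ i ∈ s, P.eval (v i) = f (v i) := fun i hi ↦
    Lagrange.eval_interpolate_at_node (fun i ↦ f (v i)) hv hi
  have hN : ∀ i ∈ s, N.eval (v i) = 0 := fun i hi ↦ Lagrange.eval_nodal_at_node hi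
  by_cases hNx : N.eval x = 0
  · obtain ⟨i, hi, rfl⟩ : ∃ i ∈ s, x = v i := by
      simpa [N, Lagrange.eval_nodal, Finset.prod_eq_zero_iff, sub_eq_zero] using hNx
    exact ⟨v i, hx, by rw [hP i hi, hNx, sub_self, mul_zero]⟩
  set c := (f x - P.eval x) / N.eval x with hc
  set Q := P + Polynomial.C c * N
  have hQ : ContDiff ℝ s.card (fun y ↦ Q.eval y) := by simpa using Q.contDiff_aeval (𝕜 := ℝ) _
  have hxs : x ∉ s.image v := fun h ↦ by
    obtain ⟨i, hi, rfl⟩ := Finset.mem_image.1 h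
    exact hNx (hN i hi)
  obtain ⟨ξ, hξ, hξ0⟩ := exists_iteratedDeriv_eq_zero (hf.sub hQ) (I := I)
    (s := insert x (s.image v))
    (by rw [Finset.card_insert_of_notMem hxs, Finset.card_image_of_injOn hv])
    (by simpa [hx] using hvI)
    (by
      simp only [Finset.forall_mem_insert, Finset.forall_mem_image, Q, Polynomial.eval_add,
        Polynomial.eval_mul, Polynomial.eval_C]
      refine ⟨by rw [hc, div_mul_cancel₀ _ hNx]; ring, fun i hi ↦ by rw [hP i hi, hN i hi]; ring⟩)
  have hderQ : iteratedDeriv s.card (fun y ↦ Q.eval y) ξ = c * s.card.factorial := by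
    rw [iteratedDeriv_polynomial_eval, iterate_map_add, Polynomial.iterate_derivative_C_mul,
      iterate_derivative_nodal, Polynomial.iterate_derivative_eq_zero_of_degree_lt
        (Lagrange.degree_interpolate_lt _ hv)]
    simp
  have hderf : iteratedDeriv s.card f ξ = c * s.card.factorial := by
    rw [← hderQ]
    rw [iteratedDeriv_fun_sub hf.contDiffAt hQ.contDiffAt] at hξ0
    linarith
  refine ⟨ξ, hξ, ?_⟩
  rw [hderf, mul_div_cancel_right₀ _ (by positivity), hc, div_mul_cancel₀ _ hNx]

/-- The nonzero integers of absolute value at most `m`: the interpolation nodes, up to the scaling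
`j ↦ j / m`, used to extrapolate to `0`. -/
def puncturedNodes (m : ℕ) : Finset ℤ := (Finset.Icc (-(m : ℤ)) m).erase 0

theorem mem_puncturedNodes {m : ℕ} {j : ℤ} : j ∈ puncturedNodes m ↔ j ≠ 0 ∧ |j| ≤ m := by
  simp [puncturedNodes, abs_le]

theorem card_puncturedNodes (m : ℕ) : (puncturedNodes m).card = 2 * m := by
  rw [puncturedNodes, Finset.card_erase_of_mem (by simp), Int.card_Icc]
  lia

theorem abs_div_le_one_of_mem_puncturedNodes {m : ℕ} {j : ℤ} (hj : j ∈ puncturedNodes m) :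
    |(j : ℝ) / m| ≤ 1 := by
  rw [abs_div, Nat.abs_cast]
  exact div_le_one_of_le₀ (by exact_mod_cast (mem_puncturedNodes.1 hj).2) m.cast_nonneg

theorem prod_abs_Icc_erase_zero (a b : ℕ) :
    ∏ j ∈ (Finset.Icc (-(a : ℤ)) b).erase 0, |j| = a.factorial * b.factorial := by
  have hsplit : (Finset.Icc (-(a : ℤ)) b).erase 0 =
      (Finset.range a).image (fun i : ℕ ↦ -((i : ℤ) + 1)) ∪
        (Finset.range b).image (fun i : ℕ ↦ (i : ℤ) + 1) := by
    ext j
    simp only [Finset.mem_erase, Finset.mem_Icc, Finset.mem_union, Finset.mem_image,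
      Finset.mem_range]
    constructor
    · intro h
      rcases lt_or_gt_of_ne h.1 with hj | hj
      · exact Or.inl ⟨j.natAbs - 1, by lia, by lia⟩
      · exact Or.inr ⟨j.natAbs - 1, by lia, by lia⟩
    · rintro (⟨i, hi, rfl⟩ | ⟨i, hi, rfl⟩) <;> lia
  rw [hsplit, Finset.prod_union, Finset.prod_image (by intro; lia),
    Finset.prod_image (by intro; lia)]
  · simp_rw [abs_neg]
    rw [← Finset.prod_range_add_one_eq_factorial a, ← Finset.prod_range_add_one_eq_factorial b]
    push_cast
    congr 1
  · rw [Finset.disjoint_left]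
    simp only [Finset.mem_image]
    rintro - ⟨i, -, rfl⟩ ⟨k, -, hk⟩
    lia

theorem factorial_mul_self_le (m i : ℕ) (hi : i ≤ m) :
    m.factorial * m.factorial ≤ (m + i).factorial * (m - i).factorial := by
  have hchoose := Nat.choose_le_centralBinom (m - i) m
  have hi' := Nat.add_choose_mul_factorial_mul_factorial (m + i) (m - i)
  have hm := Nat.add_choose_mul_factorial_mul_factorial m m
  rw [show m + i + (m - i) = 2 * m by lia, mul_assoc] at hi'
  rw [show m + m = 2 * m by lia, mul_assoc] at hm
  refine Nat.le_of_mul_le_mul_left ?_ (Nat.centralBinom_pos m)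
  calc m.centralBinom * (m.factorial * m.factorial)
      = (2 * m).choose (m - i) * ((m + i).factorial * (m - i).factorial) := by
        rw [Nat.centralBinom, hm, hi']
    _ ≤ m.centralBinom * ((m + i).factorial * (m - i).factorial) := by gcongr

theorem prod_abs_erase_le (m : ℕ) {i : ℤ} (hi : i ∈ puncturedNodes m) :
    ∏ j ∈ (puncturedNodes m).erase i, |j| ≤ ∏ j ∈ (puncturedNodes m).erase i, |i - j| := by
  obtain ⟨hi0, him⟩ := mem_puncturedNodes.1 hi
  rw [abs_le] at him
  have hsum : ∀ a b : ℕ, (a : ℤ) = m + i → (b : ℤ) = m - i →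
      ∏ j ∈ (Finset.Icc (-(m : ℤ)) m).erase i, |i - j| = a.factorial * b.factorial := by
    intro a b ha hb
    rw [← prod_abs_Icc_erase_zero]
    refine Finset.prod_nbij' (· - i) (· + i) ?_ ?_ ?_ ?_ fun j _ ↦ abs_sub_comm _ _
    all_goals intro j hj; simp only [Finset.mem_erase, Finset.mem_Icc] at hj ⊢; lia
  have hshift : ∏ j ∈ (Finset.Icc (-(m : ℤ)) m).erase i, |i - j| =
      (m + i.natAbs).factorial * (m - i.natAbs).factorial := by
    rcases le_total 0 i with h | h
    · exact hsum _ _ (by lia) (by lia)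
    · rw [hsum (m - i.natAbs) (m + i.natAbs) (by lia) (by lia), mul_comm]
  refine le_of_mul_le_mul_left ?_ (abs_pos.2 hi0)
  calc |i| * ∏ j ∈ (puncturedNodes m).erase i, |j|
      = m.factorial * m.factorial := by
        rw [Finset.mul_prod_erase _ (fun j ↦ |j|) hi, puncturedNodes, prod_abs_Icc_erase_zero]
    _ ≤ (m + i.natAbs).factorial * (m - i.natAbs).factorial := by
        exact_mod_cast factorial_mul_self_le m i.natAbs (by lia)
    _ = |i| * ∏ j ∈ (puncturedNodes m).erase i, |i - j| := by
        rw [← hshift, puncturedNodes, Finset.erase_right_comm, ← Finset.mul_prod_erase _ _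
          (show (0 : ℤ) ∈ (Finset.Icc (-(m : ℤ)) m).erase i by simp [hi0.symm]), sub_zero]

/- For the full set of nodes the product is at most `1`, and each missing factor is at least
`1 / (2 * m)`. -/
theorem prod_abs_div_abs_sub_le {m : ℕ} {J : Finset ℤ} (hJ : J ⊆ puncturedNodes m) {i : ℤ}
    (hi : i ∈ J) :
    ∏ j ∈ J.erase i, (|(j : ℝ)| / |(i : ℝ) - j|) ≤ (2 * m : ℝ) ^ (2 * m - J.card) := by
  set S := puncturedNodes m
  have hm : (1 : ℝ) ≤ m := by
    obtain ⟨h0, him⟩ := mem_puncturedNodes.1 (hJ hi)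
    have : (1 : ℤ) ≤ m := (Int.one_le_abs h0).trans him
    exact_mod_cast this
  have hfactor : ∀ j ∈ S \ J, (2 * m : ℝ)⁻¹ ≤ |(j : ℝ)| / |(i : ℝ) - j| := by
    intro j hj
    obtain ⟨hjS, hjJ⟩ := Finset.mem_sdiff.1 hj
    obtain ⟨hj0, hjm⟩ := mem_puncturedNodes.1 hjS
    have him := (mem_puncturedNodes.1 (hJ hi)).2
    have hne : i - j ≠ 0 := sub_ne_zero.2 fun h ↦ hjJ (h ▸ hi)
    have hj1 : (1 : ℝ) ≤ |(j : ℝ)| := by exact_mod_cast Int.one_le_abs hj0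
    have hpos : (0 : ℝ) < |(i : ℝ) - j| := by exact_mod_cast abs_pos.2 hne
    have hle : |(i : ℝ) - j| ≤ 2 * m := by
      have : |i - j| ≤ 2 * m := (abs_sub i j).trans (by lia)
      exact_mod_cast this
    rw [inv_eq_one_div]
    gcongr
  have hfull : ∏ j ∈ S.erase i, (|(j : ℝ)| / |(i : ℝ) - j|) ≤ 1 := by
    rw [Finset.prod_div_distrib]
    exact div_le_one_of_le₀ (by exact_mod_cast prod_abs_erase_le m (hJ hi))
      (Finset.prod_nonneg fun j _ ↦ abs_nonneg _)
  have hsdiff : S.erase i \ J.erase i = S \ J := by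
    ext j
    simp only [Finset.mem_sdiff, Finset.mem_erase]
    grind
  have hcard : (S \ J).card = 2 * m - J.card := by
    rw [Finset.card_sdiff_of_subset hJ, card_puncturedNodes]
  have hmissing : ((2 * m : ℝ) ^ (2 * m - J.card))⁻¹ ≤
      ∏ j ∈ S \ J, (|(j : ℝ)| / |(i : ℝ) - j|) := by
    rw [← inv_pow, ← hcard, ← Finset.prod_const]
    exact Finset.prod_le_prod (fun j _ ↦ by positivity) hfactor
  have hpos : (0 : ℝ) < (2 * m : ℝ) ^ (2 * m - J.card) := by positivity
  rw [← inv_mul_le_one₀ hpos]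
  refine le_trans ?_ hfull
  rw [← Finset.prod_sdiff (Finset.erase_subset_erase i hJ), hsdiff]
  gcongr

theorem abs_eval_basis_zero {m : ℕ} (hm : m ≠ 0) (J : Finset ℤ) (i : ℤ) :
    |(Lagrange.basis J (fun j : ℤ ↦ (j : ℝ) / m) i).eval 0| =
      ∏ j ∈ J.erase i, (|(j : ℝ)| / |(i : ℝ) - j|) := by
  rw [Lagrange.basis, Polynomial.eval_prod, Finset.abs_prod]
  refine Finset.prod_congr rfl fun j _ ↦ ?_
  simp only [Lagrange.basisDivisor, Polynomial.eval_mul, Polynomial.eval_C, Polynomial.eval_sub,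
    Polynomial.eval_X, zero_sub]
  rw [abs_mul, abs_neg, abs_inv, ← sub_div, abs_div, abs_div, Nat.abs_cast]
  field_simp

theorem abs_eval_interpolate_zero_le {m : ℕ} (hm : m ≠ 0) {J : Finset ℤ}
    (hJ : J ⊆ puncturedNodes m) {y : ℤ → ℝ} (hy : ∀ j ∈ J, |y j| ≤ 1) :
    |(Lagrange.interpolate J (fun j : ℤ ↦ (j : ℝ) / m) y).eval 0| ≤
      (2 * m : ℝ) ^ (2 * m - J.card + 1) := by
  have hcard : J.card ≤ 2 * m := card_puncturedNodes m ▸ Finset.card_le_card hJ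
  rw [Lagrange.interpolate_apply, Polynomial.eval_finsetSum]
  refine (Finset.abs_sum_le_sum_abs _ _).trans ?_
  calc ∑ i ∈ J, |(Polynomial.C (y i) * Lagrange.basis J (fun j : ℤ ↦ (j : ℝ) / m) i).eval 0|
      ≤ ∑ i ∈ J, 1 * (2 * m : ℝ) ^ (2 * m - J.card) := by
        refine Finset.sum_le_sum fun i hi ↦ ?_
        rw [Polynomial.eval_mul, Polynomial.eval_C, abs_mul, abs_eval_basis_zero hm]
        gcongr
        exacts [hy i hi, prod_abs_div_abs_sub_le hJ hi]
    _ = J.card * (2 * m : ℝ) ^ (2 * m - J.card) := by simp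
    _ ≤ (2 * m : ℝ) * (2 * m : ℝ) ^ (2 * m - J.card) := by
        gcongr
        exact_mod_cast hcard
    _ = (2 * m : ℝ) ^ (2 * m - J.card + 1) := by ring

theorem abs_apply_zero_le_of_puncturedNodes {m : ℕ} (hm : m ≠ 0) {J : Finset ℤ}
    (hJ : J ⊆ puncturedNodes m) {f : ℝ → ℝ} (hf : ContDiff ℝ J.card f) {D : ℝ}
    (hfJ : ∀ j ∈ J, |f (j / m)| ≤ 1) (hD : ∀ s, |s| ≤ 1 → |iteratedDeriv J.card f s| ≤ D) :
    |f 0| ≤ (2 * m : ℝ) ^ (2 * m - J.card + 1) + D / J.card.factorial := by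
  set v : ℤ → ℝ := fun j ↦ (j : ℝ) / m
  have hv1 : ∀ j ∈ J, |v j| ≤ 1 := fun j hj ↦ abs_div_le_one_of_mem_puncturedNodes (hJ hj)
  have hv : Function.Injective v := fun a b hab ↦ by
    simpa [v, div_left_inj' (Nat.cast_ne_zero.2 hm : (m : ℝ) ≠ 0)] using hab
  set P := (Lagrange.interpolate J v (fun j ↦ f (v j))).eval 0
  obtain ⟨ξ, hξ, herr⟩ := exists_sub_eval_interpolate_eq hv.injOn hf (I := Set.Icc (-1) 1)
    (fun j hj ↦ abs_le.1 (hv1 j hj)) (x := 0) (by simp)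
  have hnodal : |(Lagrange.nodal J v).eval 0| ≤ 1 := by
    rw [Lagrange.eval_nodal, Finset.abs_prod]
    exact Finset.prod_le_one (fun j _ ↦ abs_nonneg _) (fun j hj ↦ by simpa using hv1 j hj)
  have hrem : |f 0 - P| ≤ D / J.card.factorial := by
    rw [herr, abs_mul, abs_div, Nat.abs_cast]
    calc _ ≤ |iteratedDeriv J.card f ξ| / J.card.factorial * 1 := by gcongr
      _ ≤ D / J.card.factorial := by
        rw [mul_one]
        gcongr
        exact hD ξ (abs_le.2 hξ)
  calc |f 0| = |P + (f 0 - P)| := by rw [add_sub_cancel]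
    _ ≤ |P| + |f 0 - P| := abs_add_le _ _
    _ ≤ _ := add_le_add (abs_eval_interpolate_zero_le hm hJ hfJ) hrem

end Interpolation

section TruncPow

/-- The truncated power `t ↦ t₊ᵏ`, used to build weights and cutoffs of finite smoothness. For
`k = 0` it is the constant `1`. -/
def truncPow (k : ℕ) (t : ℝ) : ℝ := (max t 0) ^ k

theorem truncPow_nonneg (k : ℕ) (t : ℝ) : 0 ≤ truncPow k t := by
  unfold truncPow; positivity

theorem truncPow_mono (k : ℕ) : Monotone (truncPow k) := fun s t hst ↦ by
  unfold truncPow; gcongr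

theorem truncPow_of_nonneg (k : ℕ) {t : ℝ} (ht : 0 ≤ t) : truncPow k t = t ^ k := by
  rw [truncPow, max_eq_left ht]

theorem truncPow_succ_of_nonpos (k : ℕ) {t : ℝ} (ht : t ≤ 0) : truncPow (k + 1) t = 0 := by
  simp [truncPow, max_eq_right ht]

theorem truncPow_le_one (k : ℕ) {t : ℝ} (ht : t ≤ 1) : truncPow k t ≤ 1 :=
  pow_le_one₀ (le_max_right _ _) (max_le ht zero_le_one)

theorem continuous_truncPow (k : ℕ) : Continuous (truncPow k) := by
  unfold truncPow; fun_prop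

theorem hasDerivAt_truncPow (k : ℕ) (t : ℝ) :
    HasDerivAt (truncPow (k + 2)) ((k + 2) * truncPow (k + 1) t) t := by
  refine hasDerivAt_of_hasDerivAt_of_ne' (g := fun t ↦ (k + 2) * truncPow (k + 1) t) (x := 0) ?_
    (continuous_truncPow _).continuousAt
    (continuous_const.mul (continuous_truncPow _)).continuousAt t
  intro y hy
  rcases lt_or_gt_of_ne hy with hneg | hpos
  · have hzero : truncPow (k + 2) =ᶠ[nhds y] fun _ ↦ 0 := by
      filter_upwards [Iio_mem_nhds hneg] with z hz using truncPow_succ_of_nonpos _ hz.le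
    rw [truncPow_succ_of_nonpos _ hneg.le, mul_zero]
    exact (hasDerivAt_const y (0 : ℝ)).congr_of_eventuallyEq hzero
  · have hpow : truncPow (k + 2) =ᶠ[nhds y] fun z ↦ z ^ (k + 2) := by
      filter_upwards [Ioi_mem_nhds hpos] with z hz using truncPow_of_nonneg _ hz.le
    rw [truncPow_of_nonneg _ hpos.le]
    exact_mod_cast (hasDerivAt_pow (k + 2) y).congr_of_eventuallyEq hpow

theorem deriv_truncPow (k : ℕ) :
    deriv (truncPow (k + 2)) = fun t ↦ (k + 2) * truncPow (k + 1) t :=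
  funext fun t ↦ (hasDerivAt_truncPow k t).deriv

theorem contDiff_truncPow (k : ℕ) : ContDiff ℝ k (truncPow (k + 1)) := by
  induction k with
  | zero => exact contDiff_zero.2 (continuous_truncPow 1)
  | succ k ih =>
    push_cast
    refine contDiff_succ_iff_deriv.2
      ⟨fun t ↦ (hasDerivAt_truncPow k t).differentiableAt, by simp, ?_⟩
    rw [deriv_truncPow]
    exact contDiff_const.mul ih

end TruncPow

section CompactlySupportedWeight

variable {E : Type*} [NormedAddCommGroup E]

theorem hasCompactSupport_of_eq_zero_of_one_le_norm [ProperSpace E] {h : E → ℝ}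
    (hh : ∀ z, 1 ≤ ‖z‖ → h z = 0) : HasCompactSupport h :=
  .intro (isCompact_closedBall (0 : E) 1) fun z hz ↦
    hh z (by rw [mem_closedBall_zero_iff, not_le] at hz; exact hz.le)

variable [MeasurableSpace E] {μ : Measure E}

theorem abs_integral_mul_le_of_eq_zero_of_one_le_norm [ProperSpace E] [IsFiniteMeasureOnCompacts μ]
    {g h : E → ℝ} {S H : ℝ} (hS : 0 ≤ S) (hg : ∀ z, ‖z‖ ≤ 1 → |g z| ≤ S) (hh : ∀ z, |h z| ≤ H)
    (hh0 : ∀ z, 1 ≤ ‖z‖ → h z = 0) :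
    |∫ z, g z * h z ∂μ| ≤ S * H * μ.real (closedBall 0 1) := by
  have hrestrict : ∫ z in closedBall (0 : E) 1, g z * h z ∂μ = ∫ z, g z * h z ∂μ :=
    setIntegral_eq_integral_of_forall_compl_eq_zero fun z hz ↦ by
      rw [mem_closedBall_zero_iff, not_le] at hz
      rw [hh0 z hz.le, mul_zero]
  rw [← hrestrict, ← Real.norm_eq_abs]
  refine norm_setIntegral_le_of_norm_le_const (isCompact_closedBall 0 1).measure_lt_top
    fun z hz ↦ ?_
  rw [norm_mul]
  exact mul_le_mul (hg z (mem_closedBall_zero_iff.1 hz)) (hh z) (norm_nonneg _) hS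

end CompactlySupportedWeight

section DirectionalDerivative

variable {E : Type*} [NormedAddCommGroup E] [NormedSpace ℝ E]

theorem contDiff_fderiv_apply {U : E → ℝ}
    {m p : WithTop ℕ∞} (hU : ContDiff ℝ p U) (hmp : m + 1 ≤ p) (v : E) :
    ContDiff ℝ m fun y ↦ fderiv ℝ U y v :=
  (hU.fderiv_right hmp).clm_apply contDiff_const

theorem fderiv_comp_add_smul_apply {g : E → ℝ} {x z : E} {R : ℝ}
    (hg : DifferentiableAt ℝ g (x + R • z)) (v : E) :
    fderiv ℝ (fun z ↦ g (x + R • z)) z v = R * fderiv ℝ g (x + R • z) v := by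
  have hinner : HasFDerivAt (fun z : E ↦ x + R • z) (R • ContinuousLinearMap.id ℝ E) z :=
    ((hasFDerivAt_id z).const_smul R).const_add x
  have hcomp : fderiv ℝ (fun z ↦ g (x + R • z)) z = _ := (hg.hasFDerivAt.comp z hinner).fderiv
  simp [hcomp]

variable [MeasurableSpace E] {μ : Measure E}

theorem hasDerivAt_integral_comp_mul [BorelSpace E] [IsFiniteMeasureOnCompacts μ] {U h : E → ℝ}
    (hU : ContDiff ℝ 1 U) (hh : Continuous h) (hsupp : HasCompactSupport h) (x : E) (R : ℝ) :
    HasDerivAt (fun R ↦ ∫ z, U (x + R • z) * h z ∂μ)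
      (∫ z, fderiv ℝ U (x + R • z) z * h z ∂μ) R := by
  have hdU : Continuous fun p : ℝ × E ↦ fderiv ℝ U (x + p.1 • p.2) p.2 :=
    ((hU.continuous_fderiv (by simp)).comp (by fun_prop)).clm_apply continuous_snd
  have hdU' (s : ℝ) : Continuous fun z ↦ fderiv ℝ U (x + s • z) z :=
    hdU.comp (Continuous.prodMk_right s)
  have hU' (s : ℝ) : Continuous fun z ↦ U (x + s • z) := hU.continuous.comp (by fun_prop)
  obtain ⟨K, hK⟩ := ((isCompact_closedBall R 1).prod hsupp.isCompact).exists_bound_of_continuousOn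
    hdU.continuousOn
  refine (hasDerivAt_integral_of_dominated_loc_of_deriv_le (bound := fun z ↦ K * ‖h z‖)
    (F := fun R z ↦ U (x + R • z) * h z) (F' := fun R z ↦ fderiv ℝ U (x + R • z) z * h z)
    (ball_mem_nhds R one_pos) (.of_forall fun s ↦ ((hU' s).mul hh).aestronglyMeasurable)
    (((hU' R).mul hh).integrable_of_hasCompactSupport hsupp.mul_left)
    ((hdU' R).mul hh).aestronglyMeasurable (.of_forall fun z s hs ↦ ?_)
    ((continuous_const.mul hh.norm).integrable_of_hasCompactSupport hsupp.norm.mul_left)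
    (.of_forall fun z s _ ↦ ?_)).2
  · rw [norm_mul]
    by_cases hz : z ∈ tsupport h
    · gcongr
      exact hK (s, z) ⟨ball_subset_closedBall hs, hz⟩
    · simp [image_eq_zero_of_notMem_tsupport hz]
  · have hline : HasDerivAt (fun s : ℝ ↦ x + s • z) z s := by
      simpa using ((hasDerivAt_id s).smul_const z).const_add x
    exact ((hU.differentiable (by simp) _).hasFDerivAt.comp_hasDerivAt s hline).mul_const _

end DirectionalDerivative

section BallBump

variable {E : Type*} [NormedAddCommGroup E]

/-- The weight `z ↦ (1 - ‖z‖²)₊ᵏ` on the unit ball. The gradient of the `(k + 2)`-nd one is a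
multiple of `z` times the `(k + 1)`-st, which turns a radial derivative into a Laplacian. -/
def ballBump (k : ℕ) (z : E) : ℝ := truncPow k (1 - ‖z‖ ^ 2)

theorem ballBump_nonneg (k : ℕ) (z : E) : 0 ≤ ballBump k z := truncPow_nonneg _ _

theorem ballBump_le_one (k : ℕ) (z : E) : ballBump k z ≤ 1 :=
  truncPow_le_one k (by linarith [sq_nonneg ‖z‖])

theorem ballBump_succ_eq_zero (k : ℕ) {z : E} (hz : 1 ≤ ‖z‖) : ballBump (k + 1) z = 0 :=
  truncPow_succ_of_nonpos k (by linarith [one_le_pow₀ (n := 2) hz])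

theorem continuous_ballBump (k : ℕ) : Continuous (ballBump k : E → ℝ) :=
  (continuous_truncPow k).comp (by fun_prop)

variable [InnerProductSpace ℝ E]

theorem contDiff_ballBump (k : ℕ) : ContDiff ℝ k (ballBump (k + 1) : E → ℝ) :=
  (contDiff_truncPow k).comp (contDiff_const.sub (contDiff_norm_sq ℝ))

theorem fderiv_ballBump_apply (k : ℕ) (z v : E) :
    fderiv ℝ (ballBump (k + 2)) z v = -(2 * (k + 2)) * ballBump (k + 1) z * inner ℝ z v := by
  have hsq : HasFDerivAt (fun z : E ↦ 1 - ‖z‖ ^ 2) (0 - 2 • innerSL ℝ z) z :=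
    (hasFDerivAt_const _ _).sub (hasStrictFDerivAt_norm_sq z).hasFDerivAt
  have hcomp : fderiv ℝ (ballBump (k + 2)) z = _ :=
    ((hasDerivAt_truncPow k (1 - ‖z‖ ^ 2)).comp_hasFDerivAt z hsq).fderiv
  simp only [hcomp, ballBump, zero_sub, smul_apply,
    neg_apply, innerSL_apply_apply, smul_eq_mul, nsmul_eq_mul]
  push_cast
  ring

theorem abs_fderiv_ballBump_apply_le (k : ℕ) (z v : E) :
    |fderiv ℝ (ballBump (k + 2)) z v| ≤ 2 * (k + 2) * ‖v‖ := by
  rw [fderiv_ballBump_apply]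
  rcases le_total 1 ‖z‖ with hz | hz
  · rw [ballBump_succ_eq_zero k hz, mul_zero, zero_mul, abs_zero]
    positivity
  · have hinner : |inner ℝ z v| ≤ ‖v‖ :=
      (abs_real_inner_le_norm z v).trans (mul_le_of_le_one_left (norm_nonneg v) hz)
    rw [abs_mul, abs_mul, abs_neg, abs_of_nonneg (by positivity : (0 : ℝ) ≤ 2 * (k + 2)),
      abs_of_nonneg (ballBump_nonneg _ _)]
    calc 2 * ((k : ℝ) + 2) * ballBump (k + 1) z * |inner ℝ z v|
        ≤ 2 * (k + 2) * 1 * ‖v‖ := by gcongr; exact ballBump_le_one _ _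
      _ = 2 * (k + 2) * ‖v‖ := by ring

theorem fderiv_ballBump_apply_eq_zero (k : ℕ) {z : E} (v : E) (hz : 1 ≤ ‖z‖) :
    fderiv ℝ (ballBump (k + 2)) z v = 0 := by
  rw [fderiv_ballBump_apply, ballBump_succ_eq_zero k hz, mul_zero, zero_mul]

theorem continuous_fderiv_ballBump_apply (k : ℕ) (v : E) :
    Continuous fun z ↦ fderiv ℝ (ballBump (k + 2)) z v :=
  ((contDiff_ballBump (k + 1)).continuous_fderiv (by simp)).clm_apply continuous_const

variable [FiniteDimensional ℝ E]

theorem hasCompactSupport_ballBump (k : ℕ) : HasCompactSupport (ballBump (k + 1) : E → ℝ) :=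
  hasCompactSupport_of_eq_zero_of_one_le_norm fun _ ↦ ballBump_succ_eq_zero k

variable [MeasurableSpace E] {μ : Measure E}

theorem integral_ballBump_le [IsFiniteMeasureOnCompacts μ] (k : ℕ) :
    ∫ z, ballBump (k + 1) z ∂μ ≤ μ.real (closedBall (0 : E) 1) := by
  have := abs_integral_mul_le_of_eq_zero_of_one_le_norm (μ := μ) (g := fun _ ↦ 1) zero_le_one
    (by simp) (fun z ↦ (abs_of_nonneg (ballBump_nonneg (k + 1) z)).trans_le (ballBump_le_one _ z))
    fun z ↦ ballBump_succ_eq_zero k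
  simp only [one_mul] at this
  exact (le_abs_self _).trans this

variable [BorelSpace E]

theorem integrable_mul_ballBump [IsFiniteMeasureOnCompacts μ] (k : ℕ) {g : E → ℝ}
    (hg : Continuous g) : Integrable (fun z ↦ g z * ballBump (k + 1) z) μ :=
  (hg.mul (continuous_ballBump _)).integrable_of_hasCompactSupport
    (hasCompactSupport_ballBump k).mul_left

theorem integrable_mul_fderiv_ballBump_apply [IsFiniteMeasureOnCompacts μ] (k : ℕ) {g : E → ℝ}
    (hg : Continuous g) (v : E) :
    Integrable (fun z ↦ g z * fderiv ℝ (ballBump (k + 2)) z v) μ :=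
  (hg.mul (continuous_fderiv_ballBump_apply k v)).integrable_of_hasCompactSupport
    (hasCompactSupport_of_eq_zero_of_one_le_norm fun _ ↦
      fderiv_ballBump_apply_eq_zero k v).mul_left

theorem integral_ballBump_pos [IsFiniteMeasureOnCompacts μ] [μ.IsOpenPosMeasure] (k : ℕ) :
    0 < ∫ z, ballBump (k + 1) z ∂μ :=
  (continuous_ballBump (k + 1)).integral_pos_of_hasCompactSupport_nonneg_nonzero
    (hasCompactSupport_ballBump k) (ballBump_nonneg _) (x := 0) (by simp [ballBump, truncPow])

theorem integral_comp_mul_fderiv_ballBump_apply [μ.IsAddHaarMeasure] (k : ℕ) {g : E → ℝ}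
    (hg : ContDiff ℝ 1 g) (x v : E) (R : ℝ) :
    ∫ z, g (x + R • z) * fderiv ℝ (ballBump (k + 2)) z v ∂μ =
      -(R * ∫ z, fderiv ℝ g (x + R • z) v * ballBump (k + 2) z ∂μ) := by
  have hg' : ContDiff ℝ 1 fun z ↦ g (x + R • z) :=
    hg.comp (contDiff_const.add (contDiff_id.const_smul R))
  have hparts : ∫ z, g (x + R • z) * fderiv ℝ (ballBump (k + 2)) z v ∂μ =
      -∫ z, fderiv ℝ (fun z ↦ g (x + R • z)) z v * ballBump (k + 2) z ∂μ := by
    refine integral_mul_fderiv_eq_neg_fderiv_mul_of_integrable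
      (integrable_mul_ballBump _ ((hg'.continuous_fderiv (by simp)).clm_apply continuous_const))
      (integrable_mul_fderiv_ballBump_apply k hg'.continuous v)
      (integrable_mul_ballBump _ hg'.continuous)
      (fun z _ ↦ hg'.differentiable (by simp) z)
      (fun z _ ↦ (contDiff_ballBump (k + 1)).differentiable (by simp) z)
  rw [hparts, ← integral_const_mul]
  simp_rw [fderiv_comp_add_smul_apply (hg.differentiable (by simp) _), mul_assoc]

end BallBump

section MeanValue

variable {n : ℕ}

theorem continuous_lap {U : EuclideanSpace ℝ (Fin n) → ℝ} (hU : ContDiff ℝ 2 U) :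
    Continuous (lap n U) :=
  continuous_finsetSum _ fun i _ ↦ (contDiff_fderiv_apply (m := 0)
    (contDiff_fderiv_apply (m := 1) hU (by norm_num) _) (by norm_num) _).continuous

theorem fderiv_apply_mul_ballBump (k : ℕ) (L : EuclideanSpace ℝ (Fin n) →L[ℝ] ℝ)
    (z : EuclideanSpace ℝ (Fin n)) :
    L z * ballBump (k + 1) z = -(1 / (2 * (k + 2))) * ∑ i, L (EuclideanSpace.single i 1) *
      fderiv ℝ (ballBump (k + 2)) z (EuclideanSpace.single i 1) := by
  have hz : z = ∑ i, z i • EuclideanSpace.single i (1 : ℝ) := by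
    ext j; simp [Finset.sum_apply, Pi.single_apply]
  have hLz : L z = ∑ i, z i * L (EuclideanSpace.single i 1) := by
    conv_lhs => rw [hz]
    simp
  rw [hLz, Finset.sum_mul, Finset.mul_sum]
  refine Finset.sum_congr rfl fun i _ ↦ ?_
  rw [fderiv_ballBump_apply, EuclideanSpace.inner_single_right]
  simp
  field_simp

theorem hasDerivAt_integral_comp_mul_ballBump (k : ℕ) {U : EuclideanSpace ℝ (Fin n) → ℝ}
    (hU : ContDiff ℝ 2 U) (x : EuclideanSpace ℝ (Fin n)) (R : ℝ) :
    HasDerivAt (fun R ↦ ∫ z, U (x + R • z) * ballBump (k + 1) z)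
      (R / (2 * (k + 2)) * ∫ z, lap n U (x + R • z) * ballBump (k + 2) z) R := by
  refine (hasDerivAt_integral_comp_mul (hU.of_le one_le_two) (continuous_ballBump _)
    (hasCompactSupport_ballBump k) x R).congr_deriv ?_
  have hdi (i : Fin n) : ContDiff ℝ 1 fun y ↦ fderiv ℝ U y (EuclideanSpace.single i 1) :=
    contDiff_fderiv_apply hU (by norm_num) _
  have hcomp {g : EuclideanSpace ℝ (Fin n) → ℝ} (hg : Continuous g) :
      Continuous fun z ↦ g (x + R • z) := hg.comp (by fun_prop)
  simp_rw [fderiv_apply_mul_ballBump]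
  rw [integral_const_mul, integral_finsetSum _ fun i _ ↦
    integrable_mul_fderiv_ballBump_apply k (hcomp (hdi i).continuous) _]
  simp_rw [integral_comp_mul_fderiv_ballBump_apply k (hdi _)]
  rw [Finset.sum_neg_distrib, ← Finset.mul_sum, ← integral_finsetSum _ fun i _ ↦
    integrable_mul_ballBump _
      (hcomp (contDiff_fderiv_apply (m := 0) (hdi i) (by simp) _).continuous)]
  simp_rw [lap, Finset.sum_mul]
  ring

theorem exists_integral_comp_mul_ballBump_eq (k : ℕ) {U : EuclideanSpace ℝ (Fin n) → ℝ}
    (hU : ContDiff ℝ 2 U) (x : EuclideanSpace ℝ (Fin n)) {R : ℝ} (hR : 0 < R) :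
    ∃ s ∈ Set.Ioo 0 R, ∫ z, U (x + R • z) * ballBump (k + 1) z =
      (∫ z : EuclideanSpace ℝ (Fin n), ballBump (k + 1) z) * U x +
        R * (s / (2 * (k + 2)) * ∫ z, lap n U (x + s • z) * ballBump (k + 2) z) := by
  have hderiv := hasDerivAt_integral_comp_mul_ballBump k hU x
  obtain ⟨s, hs, hslope⟩ := exists_hasDerivAt_eq_slope _ _ hR
    (HasDerivAt.continuousOn fun s _ ↦ hderiv s) fun s _ ↦ hderiv s
  refine ⟨s, hs, ?_⟩
  rw [hslope, sub_zero, mul_div_cancel₀ _ hR.ne']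
  simp only [zero_smul, add_zero, integral_const_mul]
  ring

theorem sub_le_integral_comp_mul_ballBump (k : ℕ) {U : EuclideanSpace ℝ (Fin n) → ℝ}
    (hU : ContDiff ℝ 2 U) (x : EuclideanSpace ℝ (Fin n)) {R K : ℝ} (hR : 0 < R) (hK : 0 ≤ K)
    (hlap : ∀ y, -K ≤ lap n U y) :
    (∫ z : EuclideanSpace ℝ (Fin n), ballBump (k + 1) z) * U x - K * R ^ 2 / (2 * (k + 2)) *
        ∫ z : EuclideanSpace ℝ (Fin n), ballBump (k + 2) z ≤
      ∫ z, U (x + R • z) * ballBump (k + 1) z := by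
  obtain ⟨s, ⟨hs, hsR⟩, hmv⟩ := exists_integral_comp_mul_ballBump_eq k hU x hR
  have hcont : Continuous fun z ↦ lap n U (x + s • z) := (continuous_lap hU).comp (by fun_prop)
  set P := ∫ z : EuclideanSpace ℝ (Fin n), ballBump (k + 2) z with hP
  have hP0 : 0 < P := integral_ballBump_pos _
  have hint : -K * P ≤ ∫ z, lap n U (x + s • z) * ballBump (k + 2) z := by
    rw [hP, ← integral_const_mul]
    exact integral_mono (integrable_mul_ballBump _ continuous_const)
      (integrable_mul_ballBump _ hcont)
      fun z ↦ mul_le_mul_of_nonneg_right (hlap _) (ballBump_nonneg _ _)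
  have hscale : -(K * R ^ 2 / (2 * (k + 2)) * P) ≤ R * (s / (2 * (k + 2)) * (-K * P)) := by
    have : 0 ≤ K * P * R / (2 * ((k : ℝ) + 2)) * (R - s) :=
      mul_nonneg (by positivity) (sub_nonneg.2 hsR.le)
    calc -(K * R ^ 2 / (2 * (k + 2)) * P)
        ≤ -(K * R ^ 2 / (2 * (k + 2)) * P) + K * P * R / (2 * ((k : ℝ) + 2)) * (R - s) := by
          linarith
      _ = R * (s / (2 * (k + 2)) * (-K * P)) := by ring
  have : R * (s / (2 * (k + 2)) * (-K * P)) ≤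
      R * (s / (2 * (k + 2)) * ∫ z, lap n U (x + s • z) * ballBump (k + 2) z) := by gcongr
  linarith

end MeanValue

section DirDeriv

variable {E : Type*} [NormedAddCommGroup E] [NormedSpace ℝ E] {u : E → ℝ}

/-- The derivative of `u` in the direction `v`, as an operator on functions so that it can be
iterated. -/
def dirDeriv (v : E) (u : E → ℝ) : E → ℝ := fun y ↦ fderiv ℝ u y v

theorem contDiff_dirDeriv (hu : ContDiff ℝ (⊤ : ℕ∞) u) (v : E) :
    ContDiff ℝ (⊤ : ℕ∞) (dirDeriv v u) :=
  contDiff_fderiv_apply hu (by norm_num) v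

theorem dirDeriv_comm (hu : ContDiff ℝ 2 u) (v w : E) :
    dirDeriv v (dirDeriv w u) = dirDeriv w (dirDeriv v u) := by
  have hdiff : Differentiable ℝ (fderiv ℝ u) :=
    (hu.fderiv_right (m := 1) (by norm_num)).differentiable (by simp)
  have hsecond (a b x) : dirDeriv a (dirDeriv b u) x = fderiv ℝ (fderiv ℝ u) x a b := by
    unfold dirDeriv
    rw [fderiv_clm_apply (hdiff x) (by fun_prop)]
    simp
  ext x
  rw [hsecond, hsecond]
  exact (hu.contDiffAt.isSymmSndFDerivAt (by simp)).eq v w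

theorem iteratedDeriv_comp_line (hu : ContDiff ℝ (⊤ : ℕ∞) u) (x v : E) (k : ℕ) (s : ℝ) :
    iteratedDeriv k (fun s : ℝ ↦ u (x + s • v)) s = (dirDeriv v)^[k] u (x + s • v) := by
  induction k generalizing u with
  | zero => simp
  | succ k ih =>
    rw [iteratedDeriv_succ', Function.iterate_succ_apply, ← ih (contDiff_dirDeriv hu v)]
    congr 1
    ext t
    have hline : HasDerivAt (fun s : ℝ ↦ x + s • v) v t := by
      simpa using ((hasDerivAt_id t).smul_const v).const_add x
    exact ((hu.differentiable (by simp) _).hasFDerivAt.comp_hasDerivAt t hline).deriv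

end DirDeriv

section SmoothEigenfunction

variable {n : ℕ}

/-- `u` is smooth and `Δu = -lam u` on all of `ℝⁿ`. -/
structure IsSmoothEigenfunction (lam : ℝ) (u : EuclideanSpace ℝ (Fin n) → ℝ) : Prop where
  contDiff : ContDiff ℝ (⊤ : ℕ∞) u
  lap_eq : ∀ x, lap n u x = -lam * u x

theorem lap_const_mul {u : EuclideanSpace ℝ (Fin n) → ℝ} (hu : ContDiff ℝ 2 u) (c : ℝ)
    (x : EuclideanSpace ℝ (Fin n)) : lap n (fun y ↦ c * u y) x = c * lap n u x := by
  have hfirst (v) : (fun y ↦ fderiv ℝ (fun z ↦ c * u z) y v) = fun y ↦ c * fderiv ℝ u y v := by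
    ext y
    rw [fderiv_const_mul (hu.differentiable (by simp) y)]
    simp
  rw [lap, lap, Finset.mul_sum]
  refine Finset.sum_congr rfl fun i _ ↦ ?_
  rw [hfirst, fderiv_const_mul ((contDiff_fderiv_apply (m := 1) hu (by norm_num) _).differentiable
    (by simp) x)]
  simp

theorem lap_dirDeriv {u : EuclideanSpace ℝ (Fin n) → ℝ} (hu : ContDiff ℝ (⊤ : ℕ∞) u)
    (v x : EuclideanSpace ℝ (Fin n)) : lap n (dirDeriv v u) x = dirDeriv v (lap n u) x := by
  let e (i : Fin n) : EuclideanSpace ℝ (Fin n) := EuclideanSpace.single i 1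
  have hsmooth {w : EuclideanSpace ℝ (Fin n) → ℝ} (hw : ContDiff ℝ (⊤ : ℕ∞) w) : ContDiff ℝ 2 w :=
    hw.of_le (WithTop.coe_le_coe.2 le_top)
  have hlap : lap n u = fun y ↦ ∑ i, dirDeriv (e i) (dirDeriv (e i) u) y := rfl
  calc lap n (dirDeriv v u) x = ∑ i, dirDeriv (e i) (dirDeriv (e i) (dirDeriv v u)) x := rfl
    _ = ∑ i, dirDeriv v (dirDeriv (e i) (dirDeriv (e i) u)) x := by
      simp_rw [dirDeriv_comm (hsmooth hu) (e _) v,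
        dirDeriv_comm (hsmooth (contDiff_dirDeriv hu (e _))) (e _) v]
    _ = dirDeriv v (lap n u) x := by
      rw [hlap, dirDeriv, fderiv_fun_sum fun i _ ↦
        (contDiff_dirDeriv (contDiff_dirDeriv hu _) _).differentiable (by simp) x]
      simp [dirDeriv]

namespace IsSmoothEigenfunction

variable {lam : ℝ} {u : EuclideanSpace ℝ (Fin n) → ℝ}

theorem contDiff_two (hu : IsSmoothEigenfunction lam u) : ContDiff ℝ 2 u :=
  hu.contDiff.of_le (WithTop.coe_le_coe.2 le_top)

theorem continuous (hu : IsSmoothEigenfunction lam u) : Continuous u := hu.contDiff.continuous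

theorem const_mul (hu : IsSmoothEigenfunction lam u) (c : ℝ) :
    IsSmoothEigenfunction lam fun y ↦ c * u y where
  contDiff := contDiff_const.mul hu.contDiff
  lap_eq x := by rw [lap_const_mul hu.contDiff_two, hu.lap_eq]; ring

theorem dirDeriv (hu : IsSmoothEigenfunction lam u) (v : EuclideanSpace ℝ (Fin n)) :
    IsSmoothEigenfunction lam (dirDeriv v u) where
  contDiff := contDiff_dirDeriv hu.contDiff v
  lap_eq x := by
    rw [lap_dirDeriv hu.contDiff, funext hu.lap_eq, _root_.dirDeriv,
      fderiv_const_mul (hu.contDiff.differentiable (by simp) x)]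
    rfl

end IsSmoothEigenfunction

end SmoothEigenfunction

section GradientBound

theorem abs_mul_integral_fderiv_mul_ballBump_le {E : Type*} [NormedAddCommGroup E]
    [InnerProductSpace ℝ E] [FiniteDimensional ℝ E] [MeasurableSpace E] [BorelSpace E]
    {μ : Measure E} [μ.IsAddHaarMeasure] (k : ℕ) {u : E → ℝ} (hu : ContDiff ℝ 1 u) {x : E}
    {r S : ℝ} (hr : 0 ≤ r) (hS : ∀ y ∈ closedBall x r, |u y| ≤ S) (v : E) :
    |r * ∫ z, fderiv ℝ u (x + r • z) v * ballBump (k + 2) z ∂μ| ≤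
      S * (2 * (k + 2) * ‖v‖) * μ.real (closedBall 0 1) := by
  rw [← abs_neg, ← integral_comp_mul_fderiv_ballBump_apply k hu]
  refine abs_integral_mul_le_of_eq_zero_of_one_le_norm
    ((abs_nonneg _).trans (hS x (mem_closedBall_self hr))) (fun z hz ↦ hS _ ?_)
    (abs_fderiv_ballBump_apply_le k · v) fun z ↦ fderiv_ballBump_apply_eq_zero k v
  rw [mem_closedBall_iff_norm, add_sub_cancel_left, norm_smul, Real.norm_of_nonneg hr]
  exact mul_le_of_le_one_right hr hz

/-- The constant in the interior gradient bound `abs_dirDeriv_le`. -/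
def gradConst (n : ℕ) : ℝ :=
  5 * volume.real (closedBall (0 : EuclideanSpace ℝ (Fin n)) 1) /
    ∫ z : EuclideanSpace ℝ (Fin n), ballBump 2 z

theorem one_le_gradConst (n : ℕ) : 1 ≤ gradConst n := by
  have hpos : 0 < ∫ z : EuclideanSpace ℝ (Fin n), ballBump 2 z := integral_ballBump_pos 1
  have hle := integral_ballBump_le (μ := (volume : Measure (EuclideanSpace ℝ (Fin n)))) 1
  rw [gradConst, le_div_iff₀ hpos]
  linarith

variable {n : ℕ} {lam : ℝ} {u : EuclideanSpace ℝ (Fin n) → ℝ}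

theorem abs_dirDeriv_le (hlam : 0 ≤ lam) (hu : IsSmoothEigenfunction lam u)
    {x : EuclideanSpace ℝ (Fin n)} {R S : ℝ} (hR : 0 < R) (hlR : lam * R ^ 2 ≤ 1)
    (hS : ∀ y ∈ closedBall x R, |u y| ≤ S) (v : EuclideanSpace ℝ (Fin n)) :
    |dirDeriv v u x| ≤ gradConst n * (‖v‖ / R) * S := by
  obtain ⟨s, ⟨hs, hsR⟩, hmv⟩ :=
    exists_integral_comp_mul_ballBump_eq 1 (hu.dirDeriv v).contDiff_two x hR
  simp_rw [(hu.dirDeriv v).lap_eq, mul_assoc, integral_const_mul] at hmv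
  have hu1 : ContDiff ℝ 1 u := hu.contDiff_two.of_le one_le_two
  have hA := abs_mul_integral_fderiv_mul_ballBump_le (μ := volume) 0 hu1 hR.le hS v
  have hB := abs_mul_integral_fderiv_mul_ballBump_le (μ := volume) 1 hu1 hs.le
    (fun y hy ↦ hS y (closedBall_subset_closedBall hsR.le hy)) v
  norm_num [-abs_mul] at hmv hA hB
  set c := ∫ z : EuclideanSpace ℝ (Fin n), ballBump 2 z with hc
  set V := volume.real (closedBall (0 : EuclideanSpace ℝ (Fin n)) 1) with hV
  set A := ∫ z, fderiv ℝ u (x + R • z) v * ballBump 2 z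
  set B := ∫ z, fderiv ℝ u (x + s • z) v * ballBump 3 z
  have hc0 : 0 < c := integral_ballBump_pos 1
  have hsolve : R * c * dirDeriv v u x = R * A + lam * R ^ 2 * (s * B / 6) := by
    change A = c * dirDeriv v u x + -(R * (s / 6 * (lam * B))) at hmv
    rw [hmv]; ring
  have hbound : R * c * |dirDeriv v u x| ≤ 5 * V * ‖v‖ * S := by
    calc R * c * |dirDeriv v u x| = |R * A + lam * R ^ 2 * (s * B / 6)| := by
          rw [← hsolve, abs_mul, abs_of_pos (mul_pos hR hc0)]
      _ ≤ |R * A| + 1 * |s * B / 6| := by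
          refine (abs_add_le _ _).trans ?_
          rw [abs_mul (lam * R ^ 2), abs_of_nonneg (by positivity : 0 ≤ lam * R ^ 2)]
          gcongr
      _ ≤ S * (4 * ‖v‖) * V + S * (6 * ‖v‖) * V / 6 := by
          rw [one_mul, abs_div, abs_of_pos (by norm_num : (0 : ℝ) < 6)]
          gcongr
      _ = 5 * V * ‖v‖ * S := by ring
  rw [gradConst, ← hc, ← hV,
    show 5 * V / c * (‖v‖ / R) * S = 5 * V * ‖v‖ * S / (R * c) by field_simp,
    le_div_iff₀ (by positivity)]
  linarith

theorem abs_iterate_dirDeriv_le (hlam : 0 ≤ lam) (hu : IsSmoothEigenfunction lam u)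
    {x : EuclideanSpace ℝ (Fin n)} {r S : ℝ} (hr : 0 < r) (hlr : lam * r ^ 2 ≤ 1) (k : ℕ)
    (hS : ∀ y ∈ closedBall x (k * r), |u y| ≤ S) (v : EuclideanSpace ℝ (Fin n)) :
    |(dirDeriv v)^[k] u x| ≤ (gradConst n * (‖v‖ / r)) ^ k * S := by
  induction k generalizing u x S with
  | zero => simpa using hS x (by simp)
  | succ k ih =>
    rw [Function.iterate_succ_apply, pow_succ, mul_assoc]
    refine ih (hu.dirDeriv v) fun y hy ↦ abs_dirDeriv_le hlam hu hr hlr (fun z hz ↦ hS z ?_) v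
    rw [mem_closedBall] at *
    push_cast
    linarith [dist_triangle z y x]

end GradientBound

section Averaging

theorem exists_mem_card_filter_le {α ι : Type*} [MeasurableSpace α] {μ : Measure α} {A : Set α}
    (hA : μ A ≠ 0) (hA' : μ A ≠ ⊤) (T : Finset ι) {B : ι → Set α}
    [∀ w, DecidablePred fun i ↦ w ∈ B i] (hB : ∀ i ∈ T, MeasurableSet (B i)) {W : ι → ℝ}
    (hW : ∀ i ∈ T, μ.real (A ∩ B i) ≤ W i * μ.real A) :
    ∃ w ∈ A, ((T.filter fun i ↦ w ∈ B i).card : ℝ) ≤ ∑ i ∈ T, W i := by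
  set f : α → ℝ := fun w ↦ ∑ i ∈ T, (B i).indicator (fun _ ↦ (1 : ℝ)) w with hf
  have hint (i) (hi : i ∈ T) : IntegrableOn ((B i).indicator fun _ ↦ (1 : ℝ)) A μ :=
    (integrableOn_const hA').indicator (hB i hi)
  obtain ⟨w, hw, hle⟩ := exists_le_setAverage (f := f) hA hA' (integrable_finsetSum _ hint)
  have hcount : f w = (T.filter fun i ↦ w ∈ B i).card := by
    simp [hf, Set.indicator_apply]
  refine ⟨w, hw, hcount ▸ hle.trans ?_⟩
  have hApos : 0 < μ.real A := ENNReal.toReal_pos hA hA'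
  rw [setAverage_eq, smul_eq_mul, inv_mul_le_iff₀ hApos, integral_finsetSum _ hint, mul_comm,
    Finset.sum_mul]
  refine Finset.sum_le_sum fun i hi ↦ ?_
  rw [setIntegral_indicator (hB i hi), setIntegral_const, smul_eq_mul, mul_one]
  exact hW i hi

variable {E : Type*} [NormedAddCommGroup E] [NormedSpace ℝ E] [MeasurableSpace E] [BorelSpace E]
  [FiniteDimensional ℝ E] {μ : Measure E} [μ.IsAddHaarMeasure]

theorem measureReal_ball_inter_preimage_add_smul (F : Set E) (p a : E) (b : ℝ) {t : ℝ}
    (ht : t ≠ 0) :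
    μ.real (ball a b ∩ {w | p + t • w ∈ F}) * |t| ^ Module.finrank ℝ E =
      μ.real (F ∩ ball (p + t • a) (|t| * b)) := by
  have hpre : ball a b ∩ {w | p + t • w ∈ F} =
      (t • ·) ⁻¹' ((p + ·) ⁻¹' (F ∩ ball (p + t • a) (|t| * b))) := by
    ext w
    simp only [Set.mem_inter_iff, mem_ball, Set.mem_ofPred_eq, Set.mem_preimage, dist_add_left,
      dist_smul₀, Real.norm_eq_abs, mul_lt_mul_iff_right₀ (abs_pos.2 ht)]
    tauto
  rw [hpre, measureReal_def, Measure.addHaar_preimage_smul _ ht, measure_preimage_add,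
    ENNReal.toReal_mul, ENNReal.toReal_ofReal (abs_nonneg _), abs_inv, abs_pow, mul_right_comm,
    inv_mul_cancel₀ (pow_ne_zero _ (abs_ne_zero.2 ht)), one_mul, measureReal_def]

theorem measureReal_ball_inter_preimage_le {F : Set E} {p a : E} {b t W : ℝ} (ht : t ≠ 0)
    (hF : μ.real (F ∩ ball (p + t • a) (|t| * b)) ≤ W * μ.real (ball (p + t • a) (|t| * b))) :
    μ.real (ball a b ∩ {w | p + t • w ∈ F}) ≤ W * μ.real (ball a b) := by
  have hball := measureReal_ball_inter_preimage_add_smul (μ := μ) Set.univ p a b ht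
  simp only [Set.mem_univ, Set.ofPred_true, Set.inter_univ, Set.univ_inter] at hball
  rw [← measureReal_ball_inter_preimage_add_smul F p a b ht, ← hball, ← mul_assoc] at hF
  exact le_of_mul_le_mul_right hF (pow_pos (abs_pos.2 ht) _)

/- Averaging over `w ∈ ball a b`: the points `x + t i • (w - x)` sweep the balls in the
hypothesis. -/
theorem exists_mem_ball_card_filter_le {ι : Type*} {F : Set E} (hF : IsOpen F)
    [DecidablePred (· ∈ F)] (x a : E) {b : ℝ} (hb : 0 < b) (T : Finset ι) {t W : ι → ℝ}
    (ht : ∀ i ∈ T, t i ≠ 0)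
    (hW : ∀ i ∈ T, μ.real (F ∩ ball (x + t i • (a - x)) (|t i| * b)) ≤
      W i * μ.real (ball (x + t i • (a - x)) (|t i| * b))) :
    ∃ w ∈ ball a b, ((T.filter fun i ↦ x + t i • (w - x) ∈ F).card : ℝ) ≤ ∑ i ∈ T, W i := by
  have hline (s : ℝ) (w : E) : x + s • (w - x) = (x - s • x) + s • w := by rw [smul_sub]; abel
  simp_rw [hline] at hW ⊢
  exact exists_mem_card_filter_le (B := fun i ↦ {w | (x - t i • x) + t i • w ∈ F})
    (measure_ball_pos μ a hb).ne' measure_ball_lt_top.ne T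
    (fun i _ ↦ (hF.preimage (by fun_prop)).measurableSet)
    fun i hi ↦ measureReal_ball_inter_preimage_le (ht i hi) (hW i hi)

end Averaging

section RayExtrapolation

variable {n : ℕ} {lam : ℝ} {u : EuclideanSpace ℝ (Fin n) → ℝ}

/- Among the segments from `x` to the points of `ball a b`, pick one whose nodes mostly avoid
`{1 < |u|}`, and extrapolate from those nodes to `x`. -/
theorem exists_abs_le_of_volume_inter_le (hlam : 0 ≤ lam) (hu : IsSmoothEigenfunction lam u)
    {x a : EuclideanSpace ℝ (Fin n)} {b r S : ℝ} (hb : 0 < b) (hr : 0 < r)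
    (hlr : lam * r ^ 2 ≤ 1) {m : ℕ} (hm : m ≠ 0)
    (hS : ∀ y ∈ closedBall x (dist a x + b + 2 * m * r), |u y| ≤ S)
    {T : Finset ℤ} (hT : T ⊆ puncturedNodes m) {W : ℤ → ℝ}
    (hW : ∀ j ∈ T, volume.real ({y | 1 < |u y|} ∩
        ball (x + ((j : ℝ) / m) • (a - x)) (|(j : ℝ) / m| * b)) ≤
      W j * volume.real (ball (x + ((j : ℝ) / m) • (a - x)) (|(j : ℝ) / m| * b))) :
    ∃ k ≤ T.card, (T.card : ℝ) - ∑ j ∈ T, W j ≤ k ∧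
      |u x| ≤ (2 * m : ℝ) ^ (2 * m - k + 1) +
        (gradConst n * ((dist a x + b) / r)) ^ k * S / k.factorial := by
  classical
  have hC := zero_le_one.trans (one_le_gradConst n)
  have hS0 : 0 ≤ S := (abs_nonneg _).trans (hS x (mem_closedBall_self (by positivity)))
  have hopen : IsOpen {y | 1 < |u y|} := isOpen_lt continuous_const hu.continuous.abs
  obtain ⟨w, hw, hbad⟩ := exists_mem_ball_card_filter_le (μ := volume) hopen x a hb T
    (t := fun j ↦ (j : ℝ) / m)
    (fun j hj ↦ div_ne_zero (by exact_mod_cast (mem_puncturedNodes.1 (hT hj)).1)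
      (by exact_mod_cast hm)) hW
  have hwx : ‖w - x‖ ≤ dist a x + b := by
    rw [← dist_eq_norm]
    linarith [dist_triangle w a x, mem_ball.1 hw]
  set J := T.filter fun j : ℤ ↦ ¬ x + ((j : ℝ) / m) • (w - x) ∈ {y | 1 < |u y|}
  have hJT : J ⊆ T := Finset.filter_subset _ _
  have hJm : (J.card : ℝ) ≤ 2 * m := by
    exact_mod_cast card_puncturedNodes m ▸ Finset.card_le_card (hJT.trans hT)
  have hcard := Finset.card_filter_add_card_filter_not (s := T)
    fun j : ℤ ↦ x + ((j : ℝ) / m) • (w - x) ∈ {y | 1 < |u y|}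
  refine ⟨J.card, Finset.card_le_card hJT, ?_, ?_⟩
  · rw [← hcard]
    push_cast
    linarith
  set f : ℝ → ℝ := fun s ↦ u (x + s • (w - x))
  have hf : ContDiff ℝ J.card f :=
    (hu.contDiff.comp (contDiff_const.add (contDiff_id.smul contDiff_const))).of_le
      (WithTop.coe_le_coe.2 le_top)
  have hderiv (s : ℝ) (hs : |s| ≤ 1) :
      |iteratedDeriv J.card f s| ≤ (gradConst n * ((dist a x + b) / r)) ^ J.card * S := by
    rw [iteratedDeriv_comp_line hu.contDiff]
    refine (abs_iterate_dirDeriv_le hlam hu hr hlr J.card (fun y hy ↦ hS y ?_) (w - x)).trans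
      (by gcongr)
    have hsx : dist (x + s • (w - x)) x ≤ 1 * (dist a x + b) := by
      rw [dist_eq_norm, add_sub_cancel_left, norm_smul, Real.norm_eq_abs]
      gcongr
    have hJr : J.card * r ≤ 2 * m * r := by gcongr
    rw [mem_closedBall] at hy ⊢
    linarith [dist_triangle y (x + s • (w - x)) x]
  have hextrap := abs_apply_zero_le_of_puncturedNodes hm (hJT.trans hT) hf
    (fun j hj ↦ not_lt.1 (Finset.mem_filter.1 hj).2) hderiv
  simpa only [f, zero_smul, add_zero] using hextrap

end RayExtrapolation

section NodalCutoff

variable {n : ℕ}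

theorem lap_comp {g g' g'' : ℝ → ℝ} (hg : ∀ t, HasDerivAt g (g' t) t)
    (hg' : ∀ t, HasDerivAt g' (g'' t) t) {u : EuclideanSpace ℝ (Fin n) → ℝ} (hu : ContDiff ℝ 2 u)
    (y : EuclideanSpace ℝ (Fin n)) :
    lap n (fun x ↦ g (u x)) y = g' (u y) * lap n u y +
      g'' (u y) * ∑ i, fderiv ℝ u y (EuclideanSpace.single i 1) ^ 2 := by
  have hud : Differentiable ℝ u := hu.differentiable (by simp)
  have hfirst (v) : (fun z ↦ fderiv ℝ (fun x ↦ g (u x)) z v) =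
      fun z ↦ g' (u z) * fderiv ℝ u z v := by
    ext z
    have hcomp : fderiv ℝ (fun x ↦ g (u x)) z = _ :=
      ((hg (u z)).comp_hasFDerivAt z (hud z).hasFDerivAt).fderiv
    simp [hcomp]
  simp only [lap, Finset.mul_sum, ← Finset.sum_add_distrib, hfirst]
  refine Finset.sum_congr rfl fun i _ ↦ ?_
  have hd' : HasFDerivAt (fun z ↦ g' (u z)) (g'' (u y) • fderiv ℝ u y) y :=
    (hg' (u y)).comp_hasFDerivAt y (hud y).hasFDerivAt
  have hdu := (contDiff_fderiv_apply (m := 1) hu (by norm_num)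
    (EuclideanSpace.single i 1)).differentiable (by simp) y
  have hprod : fderiv ℝ (fun z ↦ g' (u z) * fderiv ℝ u z (EuclideanSpace.single i 1)) y = _ :=
    (hd'.mul hdu.hasFDerivAt).fderiv
  rw [hprod]
  simp only [add_apply, smul_apply, smul_eq_mul]
  ring

theorem lap_congr_of_eventuallyEq {U W : EuclideanSpace ℝ (Fin n) → ℝ}
    {y : EuclideanSpace ℝ (Fin n)} (h : U =ᶠ[nhds y] W) : lap n U y = lap n W y := by
  refine Finset.sum_congr rfl fun i _ ↦ ?_
  have hfirst : (fun y ↦ fderiv ℝ U y (EuclideanSpace.single i 1)) =ᶠ[nhds y]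
      fun y ↦ fderiv ℝ W y (EuclideanSpace.single i 1) := h.fderiv.fun_comp fun L ↦ L _
  rw [hfirst.fderiv_eq]

/-- A convex nondecreasing `C²` function vanishing up to `1/2`, with value `1` at `1`. -/
def cutoff (t : ℝ) : ℝ := 8 * truncPow 3 (t - 1 / 2)

theorem cutoff_one : cutoff 1 = 1 := by
  norm_num [cutoff, truncPow]

theorem cutoff_eq_zero {t : ℝ} (ht : t ≤ 1 / 2) : cutoff t = 0 := by
  rw [cutoff, truncPow_succ_of_nonpos 2 (by linarith), mul_zero]

theorem cutoff_le_one {t : ℝ} (ht : t ≤ 1) : cutoff t ≤ 1 := by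
  have hmono := truncPow_mono 3 (by linarith : t - 1 / 2 ≤ 1 / 2)
  rw [truncPow_of_nonneg 3 (by norm_num : (0 : ℝ) ≤ 1 / 2)] at hmono
  rw [cutoff]
  linarith

theorem contDiff_cutoff : ContDiff ℝ 2 cutoff :=
  contDiff_const.mul ((contDiff_truncPow 2).comp (contDiff_id.sub contDiff_const))

theorem hasDerivAt_cutoff (t : ℝ) : HasDerivAt cutoff (24 * truncPow 2 (t - 1 / 2)) t := by
  have hderiv : HasDerivAt cutoff _ t :=
    ((hasDerivAt_truncPow 1 _).comp_sub_const t (1 / 2)).const_mul 8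
  exact hderiv.congr_deriv (by norm_num; ring)

theorem hasDerivAt_deriv_cutoff (t : ℝ) :
    HasDerivAt (fun t ↦ 24 * truncPow 2 (t - 1 / 2)) (48 * truncPow 1 (t - 1 / 2)) t :=
  (((hasDerivAt_truncPow 0 _).comp_sub_const t (1 / 2)).const_mul 24).congr_deriv
    (by norm_num; ring)

variable {lam : ℝ} {u : EuclideanSpace ℝ (Fin n) → ℝ} {x₀ y : EuclideanSpace ℝ (Fin n)}

theorem neg_le_lap_cutoff_comp (hlam : 0 ≤ lam) (hu : IsSmoothEigenfunction lam u)
    (hy : u y ≤ 1) : -(6 * lam) ≤ lap n (fun x ↦ cutoff (u x)) y := by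
  rw [lap_comp hasDerivAt_cutoff hasDerivAt_deriv_cutoff hu.contDiff_two, hu.lap_eq]
  have hconvex : 0 ≤ 48 * truncPow 1 (u y - 1 / 2) *
      ∑ i, fderiv ℝ u y (EuclideanSpace.single i 1) ^ 2 :=
    mul_nonneg (mul_nonneg (by norm_num) (truncPow_nonneg _ _))
      (Finset.sum_nonneg fun i _ ↦ sq_nonneg _)
  have hslope : 24 * truncPow 2 (u y - 1 / 2) * u y ≤ 6 := by
    rcases le_total (u y) (1 / 2) with h | h
    · rw [truncPow_succ_of_nonpos 1 (sub_nonpos.2 h)]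
      norm_num
    · rw [truncPow_of_nonneg 2 (sub_nonneg.2 h)]
      calc 24 * (u y - 1 / 2) ^ 2 * u y ≤ 24 * (1 - 1 / 2) ^ 2 * 1 := by
            gcongr
        _ = 6 := by norm_num
  linarith [mul_le_mul_of_nonneg_left hslope hlam]

/-- `u` attains the value `1` at `x₀`, as its maximum over the nodal domain through `x₀`. -/
structure IsUnitNodalPeak (u : EuclideanSpace ℝ (Fin n) → ℝ) (x₀ : EuclideanSpace ℝ (Fin n)) :
    Prop where
  eq_one : u x₀ = 1
  le_one : ∀ y ∈ connectedComponentIn {y | u y ≠ 0} x₀, u y ≤ 1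

/-- The function `cutoff ∘ u` on the nodal domain through `x₀`, extended by zero. -/
def nodalCutoff (u : EuclideanSpace ℝ (Fin n) → ℝ) (x₀ : EuclideanSpace ℝ (Fin n)) :
    EuclideanSpace ℝ (Fin n) → ℝ :=
  (connectedComponentIn {y | u y ≠ 0} x₀).indicator fun y ↦ cutoff (u y)

theorem nodalCutoff_eventuallyEq_of_mem (hu : Continuous u)
    (hy : y ∈ connectedComponentIn {y | u y ≠ 0} x₀) :
    nodalCutoff u x₀ =ᶠ[nhds y] fun x ↦ cutoff (u x) := by
  filter_upwards [(isOpen_ne_fun hu continuous_const).connectedComponentIn.mem_nhds hy] with z hz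
  exact Set.indicator_of_mem hz _

theorem nodalCutoff_eventuallyEq_of_notMem (hu : Continuous u)
    (hy : y ∉ connectedComponentIn {y | u y ≠ 0} x₀) :
    nodalCutoff u x₀ =ᶠ[nhds y] fun _ ↦ 0 := by
  rcases lt_or_ge (u y) (1 / 2) with hlt | hge
  · filter_upwards [hu.continuousAt.eventually_lt continuousAt_const hlt] with z hz
    exact Set.indicator_apply_eq_zero.2 fun _ ↦ cutoff_eq_zero hz.le
  · have hne : u y ≠ 0 := by linarith
    filter_upwards [(isOpen_ne_fun hu continuous_const).connectedComponentIn.mem_nhds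
      (mem_connectedComponentIn hne)] with z hz
    refine Set.indicator_of_notMem (fun hz₀ ↦ hy ?_) _
    rw [connectedComponentIn_eq hz₀, ← connectedComponentIn_eq hz]
    exact mem_connectedComponentIn hne

theorem contDiff_nodalCutoff (hu : ContDiff ℝ 2 u) : ContDiff ℝ 2 (nodalCutoff u x₀) := by
  rw [contDiff_iff_contDiffAt]
  intro y
  by_cases hy : y ∈ connectedComponentIn {y | u y ≠ 0} x₀
  · exact (contDiff_cutoff.comp hu).contDiffAt.congr_of_eventuallyEq
      (nodalCutoff_eventuallyEq_of_mem hu.continuous hy)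
  · exact contDiffAt_const.congr_of_eventuallyEq
      (nodalCutoff_eventuallyEq_of_notMem hu.continuous hy)

namespace IsUnitNodalPeak

theorem nodalCutoff_eq_one (h : IsUnitNodalPeak u x₀) : nodalCutoff u x₀ x₀ = 1 := by
  rw [nodalCutoff, Set.indicator_of_mem (mem_connectedComponentIn (by simp [h.eq_one])),
    h.eq_one, cutoff_one]

theorem neg_le_lap_nodalCutoff (h : IsUnitNodalPeak u x₀) (hlam : 0 ≤ lam)
    (hu : IsSmoothEigenfunction lam u) (y : EuclideanSpace ℝ (Fin n)) :
    -(6 * lam) ≤ lap n (nodalCutoff u x₀) y := by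
  by_cases hy : y ∈ connectedComponentIn {y | u y ≠ 0} x₀
  · rw [lap_congr_of_eventuallyEq (nodalCutoff_eventuallyEq_of_mem hu.continuous hy)]
    exact neg_le_lap_cutoff_comp hlam hu (h.le_one y hy)
  · rw [lap_congr_of_eventuallyEq (nodalCutoff_eventuallyEq_of_notMem hu.continuous hy)]
    simpa [lap] using hlam

theorem nodalCutoff_le (h : IsUnitNodalPeak u x₀) (y : EuclideanSpace ℝ (Fin n)) :
    nodalCutoff u x₀ y ≤ 1 - {y | 1 < |u y|}.indicator (fun _ ↦ 1) y := by
  by_cases hy : y ∈ connectedComponentIn {y | u y ≠ 0} x₀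
  · rw [nodalCutoff, Set.indicator_of_mem hy]
    have huy := h.le_one y hy
    by_cases hbig : 1 < |u y|
    · have hneg : u y ≤ 1 / 2 := by
        rcases lt_abs.1 hbig with h | h <;> linarith
      simp [hbig, cutoff_eq_zero hneg]
    · simpa [hbig] using cutoff_le_one huy
  · rw [nodalCutoff, Set.indicator_of_notMem hy, sub_nonneg]
    exact Set.indicator_le_self' (fun _ _ ↦ zero_le_one) y

end IsUnitNodalPeak

end NodalCutoff

section LocalAsymmetry

theorem measureReal_ball_eq {E : Type*} [NormedAddCommGroup E] [NormedSpace ℝ E]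
    [FiniteDimensional ℝ E] [MeasurableSpace E] [BorelSpace E] {μ : Measure E}
    [μ.IsAddHaarMeasure] {x : E} {r : ℝ} (hr : 0 < r) :
    μ.real (ball x r) = r ^ Module.finrank ℝ E * μ.real (ball 0 1) := by
  rw [measureReal_def, Measure.addHaar_ball_of_pos μ x hr, ENNReal.toReal_mul,
    ENNReal.toReal_ofReal (by positivity), measureReal_def]

theorem half_le_ballBump_two {E : Type*} [NormedAddCommGroup E] {z : E}
    (hz : z ∈ ball (0 : E) (1 / 2)) : 1 / 2 ≤ ballBump 2 z := by
  rw [mem_ball_zero_iff] at hz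
  have hsq : ‖z‖ ^ 2 ≤ (1 / 2) ^ 2 := by gcongr
  calc (1 / 2 : ℝ) ≤ (3 / 4) ^ 2 := by norm_num
    _ = truncPow 2 (3 / 4) := (truncPow_of_nonneg 2 (by norm_num)).symm
    _ ≤ ballBump 2 z := truncPow_mono 2 (by linarith)

theorem integral_comp_mul_ballBump_two_le {E : Type*} [NormedAddCommGroup E]
    [InnerProductSpace ℝ E] [FiniteDimensional ℝ E] [MeasurableSpace E] [BorelSpace E]
    {μ : Measure E} [IsFiniteMeasureOnCompacts μ] {U : E → ℝ} (hU : Continuous U) {F : Set E}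
    (hF : IsOpen F) (hUF : ∀ y, U y ≤ 1 - F.indicator (fun _ ↦ 1) y) (x : E) (R : ℝ) :
    ∫ z, U (x + R • z) * ballBump 2 z ∂μ ≤
      ∫ z : E, ballBump 2 z ∂μ - μ.real (ball 0 (1 / 2) ∩ {z | x + R • z ∈ F}) / 2 := by
  set G : Set E := ball 0 (1 / 2) ∩ {z | x + R • z ∈ F}
  have hGm : MeasurableSet G := (isOpen_ball.inter (hF.preimage (by fun_prop))).measurableSet
  have hbump : Integrable (ballBump 2 : E → ℝ) μ := by
    simpa using integrable_mul_ballBump (μ := μ) 1 (g := fun _ ↦ 1) continuous_const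
  have hind : Integrable (G.indicator fun _ ↦ (1 / 2 : ℝ)) μ :=
    (integrable_indicator_iff hGm).2 (integrableOn_const
      ((measure_mono Set.inter_subset_left).trans_lt measure_ball_lt_top).ne)
  calc ∫ z, U (x + R • z) * ballBump 2 z ∂μ
      ≤ ∫ z, (ballBump 2 z - G.indicator (fun _ ↦ 1 / 2) z) ∂μ := by
        refine integral_mono (integrable_mul_ballBump 1 (by fun_prop)) (hbump.sub hind) fun z ↦ ?_
        have hmul := mul_le_mul_of_nonneg_right (hUF (x + R • z)) (ballBump_nonneg 2 z)
        by_cases hz : x + R • z ∈ F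
        · rw [Set.indicator_of_mem hz, sub_self, zero_mul] at hmul
          refine hmul.trans (sub_nonneg.2 ?_)
          by_cases hball : z ∈ ball (0 : E) (1 / 2)
          · exact (Set.indicator_le_self' (fun _ _ ↦ by norm_num) z).trans
              (half_le_ballBump_two hball)
          · rw [Set.indicator_of_notMem fun h ↦ hball h.1]
            exact ballBump_nonneg 2 z
        · rw [Set.indicator_of_notMem hz] at hmul
          rw [Set.indicator_of_notMem fun h ↦ hz h.2]
          simpa using hmul
    _ = _ := by
        rw [integral_sub hbump hind, integral_indicator hGm, setIntegral_const, smul_eq_mul,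
          mul_one_div]

variable {n : ℕ} {lam : ℝ} {u : EuclideanSpace ℝ (Fin n) → ℝ} {x₀ : EuclideanSpace ℝ (Fin n)}

/- The almost subharmonic function `nodalCutoff u x₀` equals `1` at `x₀` and is at most `1`, so it
cannot vanish on a large part of a ball around `x₀`; but it does vanish on `{1 < |u|}`. -/
theorem IsUnitNodalPeak.volume_inter_ball_le (h : IsUnitNodalPeak u x₀) (hlam : 0 ≤ lam)
    (hu : IsSmoothEigenfunction lam u) {ρ : ℝ} (hρ : 0 < ρ) :
    volume.real ({y | 1 < |u y|} ∩ ball x₀ ρ) ≤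
      8 * 2 ^ n * (lam * ρ ^ 2) * volume.real (ball x₀ ρ) := by
  have hU := contDiff_nodalCutoff (x₀ := x₀) hu.contDiff_two
  have hlow := sub_le_integral_comp_mul_ballBump 1 hU x₀ (mul_pos two_pos hρ)
    (mul_nonneg (by norm_num : (0 : ℝ) ≤ 6) hlam) (h.neg_le_lap_nodalCutoff hlam hu)
  have hup := integral_comp_mul_ballBump_two_le (μ := volume) hU.continuous
    (isOpen_lt continuous_const hu.continuous.abs) h.nodalCutoff_le x₀ (2 * ρ)
  have hc3 := integral_ballBump_le (μ := (volume : Measure (EuclideanSpace ℝ (Fin n)))) 2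
  rw [h.nodalCutoff_eq_one] at hlow
  norm_num at hlow hup hc3
  set V := volume.real (closedBall (0 : EuclideanSpace ℝ (Fin n)) 1) with hV
  set G := volume.real (ball 0 (1 / 2) ∩ {z | 1 < |u (x₀ + (2 * ρ) • z)|}) with hG
  have hGV : G ≤ 8 * (lam * ρ ^ 2) * V := by
    have hmono := mul_le_mul_of_nonneg_left hc3 (by positivity : 0 ≤ lam * ρ ^ 2)
    linarith
  have hscale := measureReal_ball_inter_preimage_add_smul (μ := volume) {y | 1 < |u y|} x₀ 0
    (1 / 2) (mul_pos two_pos hρ).ne'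
  have hball : volume.real (ball x₀ ρ) = ρ ^ n * V := by
    rw [hV, measureReal_ball_eq hρ, Measure.addHaar_real_closedBall _ _ zero_le_one,
      finrank_euclideanSpace_fin, one_pow, one_mul]
  simp only [Set.mem_ofPred_eq, smul_zero, add_zero, abs_of_pos (mul_pos two_pos hρ),
    finrank_euclideanSpace_fin, ← hG] at hscale
  calc volume.real ({y | 1 < |u y|} ∩ ball x₀ ρ) = G * (2 * ρ) ^ n := by rw [hscale]; ring_nf
    _ ≤ 8 * (lam * ρ ^ 2) * V * (2 * ρ) ^ n := by gcongr
    _ = 8 * 2 ^ n * (lam * ρ ^ 2) * volume.real (ball x₀ ρ) := by rw [hball]; ring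

end LocalAsymmetry

section ScaleReduction

theorem pow_div_factorial_mul_exp_le_one {m k : ℕ} {A : ℝ} (hmk : m ≤ k) (hA : A ≤ m) :
    (exp (-2) * m) ^ k * exp A / k.factorial ≤ 1 := by
  have hmk' : (m : ℝ) ≤ k := by exact_mod_cast hmk
  calc (exp (-2) * m) ^ k * exp A / k.factorial
      ≤ (exp (-2) * k) ^ k * exp k / k.factorial := by
        gcongr
        exact hA.trans hmk'
    _ = exp (-2) ^ k * exp k * ((k : ℝ) ^ k / k.factorial) := by rw [mul_pow]; ring
    _ ≤ exp (-2) ^ k * exp k * exp k := by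
        gcongr
        exact pow_div_factorial_le_exp _ k.cast_nonneg k
    _ = 1 := by
        rw [← exp_nat_mul, ← exp_add, ← exp_add, exp_eq_one_iff]
        ring

theorem sum_ite_abs_div_le (m : ℕ) {θ : ℝ} (hθ : 0 ≤ θ) :
    ∑ j ∈ puncturedNodes m, (if |(j : ℝ) / m| ≤ θ then 1 else θ) ≤ 4 * θ * m := by
  rcases m.eq_zero_or_pos with rfl | hm
  · simp [Finset.card_eq_zero.1 (card_puncturedNodes 0)]
  have hm' : (0 : ℝ) < m := by exact_mod_cast hm
  have hsmall : ((puncturedNodes m).filter fun j : ℤ ↦ |(j : ℝ) / m| ≤ θ).card ≤ 2 * (θ * m) := by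
    have hsub : ((puncturedNodes m).filter fun j : ℤ ↦ |(j : ℝ) / m| ≤ θ) ⊆
        puncturedNodes ⌊θ * m⌋₊ := by
      intro j hj
      obtain ⟨hj, hjθ⟩ := Finset.mem_filter.1 hj
      rw [abs_div, Nat.abs_cast, div_le_iff₀ hm'] at hjθ
      have hfloor : j.natAbs ≤ ⌊θ * m⌋₊ := Nat.le_floor (by rwa [Nat.cast_natAbs, Int.cast_abs])
      exact mem_puncturedNodes.2 ⟨(mem_puncturedNodes.1 hj).1, by
        rw [Int.abs_eq_natAbs]; exact_mod_cast hfloor⟩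
    have hcard := Finset.card_le_card hsub
    rw [card_puncturedNodes] at hcard
    calc _ ≤ (2 * ⌊θ * m⌋₊ : ℝ) := by exact_mod_cast hcard
      _ ≤ 2 * (θ * m) := by gcongr; exact Nat.floor_le (by positivity)
  have hlarge : ((puncturedNodes m).filter fun j : ℤ ↦ ¬|(j : ℝ) / m| ≤ θ).card ≤ 2 * (m : ℝ) := by
    exact_mod_cast card_puncturedNodes m ▸ Finset.card_filter_le _ _
  rw [Finset.sum_ite, Finset.sum_const, Finset.sum_const, nsmul_eq_mul, nsmul_eq_mul, mul_one]
  nlinarith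

/- Small balls get the trivial bound; the others are large enough to inherit the density of `F`
in the big ball. -/
theorem measureReal_inter_ball_le_ite {E : Type*} [NormedAddCommGroup E] [NormedSpace ℝ E]
    [FiniteDimensional ℝ E] [MeasurableSpace E] [BorelSpace E] {μ : Measure E}
    [μ.IsAddHaarMeasure] {F : Set E} {x x₀ : E} {ρ κ θ t : ℝ} (hρ : 0 < ρ) (hκ : 0 < κ)
    (hκ' : κ ≤ 1 / 2) (hθ : 0 < θ) (hx : dist x x₀ ≤ ρ / 2) (ht : t ≠ 0) (ht' : |t| ≤ 1)
    (hF : μ.real (F ∩ ball x₀ ρ) ≤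
      κ ^ Module.finrank ℝ E * θ ^ (Module.finrank ℝ E + 1) * μ.real (ball x₀ ρ)) :
    μ.real (F ∩ ball x (|t| * (κ * ρ))) ≤
      (if |t| ≤ θ then 1 else θ) * μ.real (ball x (|t| * (κ * ρ))) := by
  split_ifs with htθ
  · rw [one_mul]
    exact measureReal_mono Set.inter_subset_right measure_ball_lt_top.ne
  have hsub : ball x (|t| * (κ * ρ)) ⊆ ball x₀ ρ := by
    refine ball_subset_ball' ?_
    have : |t| * (κ * ρ) ≤ 1 * (1 / 2 * ρ) := by gcongr
    linarith
  set d := Module.finrank ℝ E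
  have ht₀ : 0 < |t| := abs_pos.2 ht
  calc μ.real (F ∩ ball x (|t| * (κ * ρ)))
      ≤ μ.real (F ∩ ball x₀ ρ) := measureReal_mono (Set.inter_subset_inter_right _ hsub)
        ((measure_mono Set.inter_subset_right).trans_lt measure_ball_lt_top).ne
    _ ≤ κ ^ d * θ ^ (d + 1) * μ.real (ball x₀ ρ) := hF
    _ = θ * ((θ * (κ * ρ)) ^ d * μ.real (ball 0 1)) := by rw [measureReal_ball_eq hρ]; ring
    _ ≤ θ * ((|t| * (κ * ρ)) ^ d * μ.real (ball 0 1)) := by gcongr; exact (not_le.1 htθ).le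
    _ = θ * μ.real (ball x (|t| * (κ * ρ))) := by
        rw [measureReal_ball_eq (mul_pos ht₀ (mul_pos hκ hρ))]

/-- The ratio between the radius of the ball from which the rays are drawn and the radius on
which `u` is controlled. -/
def rayConst (n : ℕ) : ℝ := exp (-2) / (8 * gradConst n)

theorem rayConst_pos (n : ℕ) : 0 < rayConst n :=
  div_pos (exp_pos _) (by linarith [one_le_gradConst n])

theorem rayConst_le (n : ℕ) : rayConst n ≤ 1 / 8 := by
  have hC := one_le_gradConst n
  rw [rayConst, div_le_div_iff₀ (by positivity) (by norm_num)]
  linarith [exp_le_one_iff.2 (by norm_num : (-2 : ℝ) ≤ 0)]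

variable {n : ℕ} {lam : ℝ} {u : EuclideanSpace ℝ (Fin n) → ℝ} {x₀ : EuclideanSpace ℝ (Fin n)}

theorem abs_le_rpow_add_one_of_volume_inter_le (hlam : 0 ≤ lam) (hu : IsSmoothEigenfunction lam u)
    {ρ θ A : ℝ} (hρ : 0 < ρ) (hlρ : lam * ρ ^ 2 ≤ 1) (hθ : 0 < θ) (hθ' : θ ≤ 1 / 4)
    (hA : ∀ y ∈ ball x₀ ρ, |u y| ≤ exp A) {m : ℕ} (hm : m ≠ 0) (hAm : A ≤ m)
    (hvol : volume.real ({y | 1 < |u y|} ∩ ball x₀ ρ) ≤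
      rayConst n ^ n * θ ^ (n + 1) * volume.real (ball x₀ ρ))
    {x : EuclideanSpace ℝ (Fin n)} (hx : x ∈ ball x₀ (ρ / 2)) :
    |u x| ≤ (2 * m : ℝ) ^ (4 * θ * m + 1) + 1 := by
  have hm' : (1 : ℝ) ≤ m := by exact_mod_cast Nat.one_le_iff_ne_zero.2 hm
  have hC := one_le_gradConst n
  have hκ := rayConst_le n
  have hr : 2 * (m : ℝ) * (ρ / (8 * m)) = ρ / 4 := by field_simp; norm_num
  obtain ⟨k, hkT, hk, hux⟩ := exists_abs_le_of_volume_inter_le hlam hu (x := x) (a := x)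
    (b := rayConst n * ρ) (r := ρ / (8 * m)) (S := exp A) (mul_pos (rayConst_pos n) hρ)
    (by positivity)
    (le_trans (by gcongr; exact div_le_self hρ.le (by linarith)) hlρ) hm
    (fun y hy ↦ hA y (by
      rw [dist_self, hr, zero_add, mem_closedBall] at hy
      rw [mem_ball] at hx ⊢
      nlinarith [dist_triangle y x x₀]))
    subset_rfl (W := fun j ↦ if |(j : ℝ) / m| ≤ θ then 1 else θ)
    (fun j hj ↦ by
      rw [sub_self, smul_zero, add_zero]
      exact measureReal_inter_ball_le_ite hρ (rayConst_pos n) (by linarith) hθ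
        (mem_ball.1 hx).le (div_ne_zero (by exact_mod_cast (mem_puncturedNodes.1 hj).1)
          (by positivity)) (abs_div_le_one_of_mem_puncturedNodes hj)
        (by rwa [finrank_euclideanSpace_fin]))
  rw [card_puncturedNodes] at hkT hk
  have hdefect : ((2 * m - k : ℕ) : ℝ) ≤ 4 * θ * m := by
    rw [Nat.cast_sub hkT]
    linarith [sum_ite_abs_div_le m hθ.le]
  have hmk : m ≤ k := by
    have : ((2 * m - k : ℕ) : ℝ) ≤ m := by nlinarith
    have : 2 * m - k ≤ m := by exact_mod_cast this
    omega
  refine hux.trans (add_le_add ?_ ?_)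
  · rw [← rpow_natCast]
    exact rpow_le_rpow_of_exponent_le (by linarith) (by push_cast; linarith)
  · rw [dist_self, zero_add, show gradConst n * (rayConst n * ρ / (ρ / (8 * m))) = exp (-2) * m by
      rw [rayConst]; field_simp]
    exact pow_div_factorial_mul_exp_le_one hmk hAm

end ScaleReduction

section Iteration

theorem two_mul_rpow_le_exp_div {L B : ℝ} (hL : 1 ≤ L) (hB : L ^ 2 ≤ B)
    (hlog : 1 + 2 * log (4 * B) ≤ L) : 2 * (4 * B) ^ (B / L ^ 2 + 1) ≤ exp (B / L) := by
  have hB1 : 1 ≤ B := (one_le_pow₀ hL).trans hB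
  have hq : 1 ≤ B / L ^ 2 := by rwa [one_le_div (by positivity)]
  have : 0 ≤ log (4 * B) := log_nonneg (by linarith)
  calc 2 * (4 * B) ^ (B / L ^ 2 + 1)
      ≤ exp 1 * exp (log (4 * B) * (B / L ^ 2 + 1)) := by
        rw [rpow_def_of_pos (by linarith)]
        gcongr
        linarith [add_one_le_exp (1 : ℝ)]
    _ = exp (1 + log (4 * B) * (B / L ^ 2 + 1)) := (exp_add _ _).symm
    _ ≤ exp (B / L ^ 2 * L) := by
        gcongr
        nlinarith [mul_le_mul_of_nonneg_left hlog (by linarith : 0 ≤ B / L ^ 2)]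
    _ = exp (B / L) := by congr 1; field_simp

variable {n : ℕ} {lam : ℝ} {u : EuclideanSpace ℝ (Fin n) → ℝ} {x₀ : EuclideanSpace ℝ (Fin n)}

theorem mul_sq_le_one_of_rayConst_bound {ρ L : ℝ} (hL : 1 ≤ L)
    (hρL : 8 * 2 ^ n * (lam * ρ ^ 2) ≤ rayConst n ^ n * (1 / (8 * L ^ 2)) ^ (n + 1)) :
    lam * ρ ^ 2 ≤ 1 := by
  have hκ : rayConst n ^ n ≤ 1 :=
    pow_le_one₀ (rayConst_pos n).le (by linarith [rayConst_le n])
  have hθ : (1 / (8 * L ^ 2)) ^ (n + 1) ≤ 1 :=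
    pow_le_one₀ (by positivity) (div_le_one_of_le₀ (by nlinarith) (by positivity))
  have h2 : (1 : ℝ) ≤ 2 ^ n := one_le_pow₀ one_le_two
  have hle := hρL.trans (mul_le_one₀ hκ (by positivity) hθ)
  nlinarith

theorem IsUnitNodalPeak.abs_le_two_mul_rpow (h : IsUnitNodalPeak u x₀) (hlam : 0 ≤ lam)
    (hu : IsSmoothEigenfunction lam u) {ρ L B : ℝ} (hρ : 0 < ρ) (hL : 1 ≤ L) (hB : 1 ≤ B)
    (hρL : 8 * 2 ^ n * (lam * ρ ^ 2) ≤ rayConst n ^ n * (1 / (8 * L ^ 2)) ^ (n + 1))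
    (hub : ∀ y ∈ ball x₀ ρ, |u y| ≤ exp B) {x : EuclideanSpace ℝ (Fin n)}
    (hx : x ∈ ball x₀ (ρ / 2)) : |u x| ≤ 2 * (4 * B) ^ (B / L ^ 2 + 1) := by
  have hm : (⌈B⌉₊ : ℝ) ≤ 2 * B := by linarith [Nat.ceil_lt_add_one (zero_le_one.trans hB)]
  have hm₀ : ⌈B⌉₊ ≠ 0 := (Nat.ceil_pos.2 (by linarith)).ne'
  have hθ : 1 / (8 * L ^ 2) ≤ 1 / 4 :=
    one_div_le_one_div_of_le (by norm_num) (by nlinarith)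
  have hstep := abs_le_rpow_add_one_of_volume_inter_le hlam hu hρ
    (mul_sq_le_one_of_rayConst_bound hL hρL) (by positivity) hθ hub hm₀ (Nat.le_ceil B)
    ((h.volume_inter_ball_le hlam hu hρ).trans (by gcongr)) hx
  have hexp : 4 * (1 / (8 * L ^ 2)) * (⌈B⌉₊ : ℝ) ≤ B / L ^ 2 := by
    calc 4 * (1 / (8 * L ^ 2)) * (⌈B⌉₊ : ℝ) ≤ 4 * (1 / (8 * L ^ 2)) * (2 * B) := by gcongr
      _ = B / L ^ 2 := by field_simp; norm_num
  have hrpow : (2 * (⌈B⌉₊ : ℝ)) ^ (4 * (1 / (8 * L ^ 2)) * (⌈B⌉₊ : ℝ) + 1) ≤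
      (4 * B) ^ (B / L ^ 2 + 1) :=
    (rpow_le_rpow (by positivity) (by linarith) (by positivity)).trans
      (rpow_le_rpow_of_exponent_le (by linarith) (by linarith))
  linarith [one_le_rpow (by linarith : 1 ≤ 4 * B) (by positivity : 0 ≤ B / L ^ 2 + 1)]

/- Each halving of the radius divides the logarithm of the sup bound by `L`. -/
theorem IsUnitNodalPeak.abs_le_exp_pow (h : IsUnitNodalPeak u x₀) (hlam : 0 ≤ lam)
    (hu : IsSmoothEigenfunction lam u) {R L : ℝ} {I : ℕ} (hR : 0 < R) (hL : 1 ≤ L)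
    (hRL : 8 * 2 ^ n * (lam * R ^ 2) ≤ rayConst n ^ n * (1 / (8 * L ^ 2)) ^ (n + 1))
    (hglob : ∀ y, |u y| ≤ exp (L ^ (I + 1))) (hlog : 1 + 2 * log (4 * L ^ (I + 1)) ≤ L) {j : ℕ}
    (hj : j ≤ I) {x : EuclideanSpace ℝ (Fin n)} (hx : x ∈ ball x₀ (R / 2 ^ j)) :
    |u x| ≤ exp (L ^ (I - j + 1)) := by
  induction j generalizing x with
  | zero => exact hglob x
  | succ j ih =>
    have hρR : R / 2 ^ j ≤ R := div_le_self hR.le (one_le_pow₀ one_le_two)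
    have hx' : x ∈ ball x₀ (R / 2 ^ j / 2) := by rwa [div_div, ← pow_succ]
    refine (h.abs_le_two_mul_rpow hlam hu (by positivity) hL (one_le_pow₀ hL)
      (le_trans (by gcongr) hRL) (fun y ↦ ih (by omega)) hx').trans ?_
    refine (two_mul_rpow_le_exp_div hL (pow_le_pow_right₀ hL (by omega)) ?_).trans_eq ?_
    · have hlog' : log (4 * L ^ (I - j + 1)) ≤ log (4 * L ^ (I + 1)) := by gcongr; omega
      linarith
    · rw [pow_succ, mul_div_cancel_right₀ _ (by positivity : L ≠ 0),
        show I - j = I - (j + 1) + 1 by omega]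

theorem IsUnitNodalPeak.abs_le_mul_sq (h : IsUnitNodalPeak u x₀) (hlam : 0 ≤ lam)
    (hu : IsSmoothEigenfunction lam u) {R L : ℝ} {I : ℕ} (hR : 0 < R) (hL : 1 ≤ L)
    (hRL : 8 * 2 ^ n * (lam * R ^ 2) ≤ rayConst n ^ n * (1 / (8 * L ^ 2)) ^ (n + 1))
    (hglob : ∀ y, |u y| ≤ exp (L ^ (I + 1))) (hlog : 1 + 2 * log (4 * L ^ (I + 1)) ≤ L)
    {x : EuclideanSpace ℝ (Fin n)} (hx : x ∈ ball x₀ (R / 2 ^ (I + 1))) :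
    |u x| ≤ 32 * L ^ 2 := by
  have hρR : R / 2 ^ I ≤ R := div_le_self hR.le (one_le_pow₀ one_le_two)
  have hlast : ∀ y ∈ ball x₀ (R / 2 ^ I), |u y| ≤ exp L := fun y hy ↦ by
    simpa using h.abs_le_exp_pow hlam hu hR hL hRL hglob hlog le_rfl hy
  calc |u x| ≤ 2 * (4 * L) ^ (L / L ^ 2 + 1) :=
        h.abs_le_two_mul_rpow hlam hu (by positivity) hL hL
          (le_trans (by gcongr) hRL) hlast (by rwa [div_div, ← pow_succ])
    _ ≤ 2 * (4 * L) ^ (2 : ℝ) := by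
        gcongr
        · linarith
        · have : L / L ^ 2 ≤ 1 := div_le_one_of_le₀ (by nlinarith) (by positivity)
          linarith
    _ = 32 * L ^ 2 := by rw [rpow_two]; ring

theorem pos_of_abs_le (hlam : 0 ≤ lam) (hu : IsSmoothEigenfunction lam u) (h₀ : u x₀ = 1)
    {R S : ℝ} (hR : 0 < R) (hlR : lam * R ^ 2 ≤ 1) (hS : ∀ x ∈ ball x₀ R, |u x| ≤ S)
    {y : EuclideanSpace ℝ (Fin n)} (hy : y ∈ ball x₀ (R / (4 * gradConst n * S))) : 0 < u y := by
  have hC := one_le_gradConst n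
  have hS1 : 1 ≤ S := by simpa [h₀] using hS x₀ (mem_ball_self hR)
  set M := 4 * gradConst n * S / R with hM
  have hM0 : 0 < M := by positivity
  have hgrad : ∀ z ∈ ball x₀ (R / 2), ‖fderiv ℝ u z‖ ≤ M := fun z hz ↦ by
    refine ContinuousLinearMap.opNorm_le_bound _ hM0.le fun v ↦ ?_
    refine (abs_dirDeriv_le hlam hu (R := R / 4) (S := S) (by positivity)
      (by nlinarith [mul_nonneg hlam (sq_nonneg R)]) (fun y hy ↦ hS y ?_) v).trans_eq ?_
    · rw [mem_ball] at hz ⊢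
      rw [mem_closedBall] at hy
      linarith [dist_triangle y z x₀]
    · rw [hM]; field_simp
  have hsub : R / (4 * gradConst n * S) ≤ R / 2 :=
    div_le_div_of_nonneg_left hR.le two_pos (by nlinarith)
  have hmv := (convex_ball x₀ (R / 2)).norm_image_sub_le_of_norm_fderiv_le
    (fun z _ ↦ hu.contDiff.differentiable (by simp) z) hgrad (mem_ball_self (by positivity))
    (ball_subset_ball hsub hy)
  rw [← one_div_div, ← hM, mem_ball, dist_eq_norm, lt_div_iff₀ hM0] at hy
  rw [h₀, Real.norm_eq_abs] at hmv
  linarith [(abs_le.1 hmv).1]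

end Iteration

section GlobalBound

theorem exists_dist_add_int_le {n : ℕ} (x y : EuclideanSpace ℝ (Fin n)) :
    ∃ v : Fin n → ℤ, dist (WithLp.toLp 2 fun i ↦ x i + (v i : ℝ)) y ≤ √n := by
  refine ⟨fun i ↦ -⌊x i - y i⌋, ?_⟩
  rw [EuclideanSpace.dist_eq]
  refine sqrt_le_sqrt ?_
  calc _ ≤ ∑ _i : Fin n, (1 : ℝ) := Finset.sum_le_sum fun i _ ↦ ?_
    _ = n := by simp
  have hfract : x i + ((-⌊x i - y i⌋ : ℤ) : ℝ) - y i = Int.fract (x i - y i) := by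
    rw [Int.fract]; push_cast; ring
  rw [Real.dist_eq, sq_abs, hfract]
  exact pow_le_one₀ (Int.fract_nonneg _) (Int.fract_lt_one _).le

theorem exists_forall_abs_le_of_znPeriodic {n : ℕ} {u : EuclideanSpace ℝ (Fin n) → ℝ}
    (hu : Continuous u) (hper : ZnPeriodic n u) (x₀ : EuclideanSpace ℝ (Fin n)) :
    ∃ x, dist x x₀ ≤ √n ∧ ∀ y, |u y| ≤ |u x| := by
  obtain ⟨x, hx, hmax⟩ := (isCompact_closedBall x₀ (√n)).exists_isMaxOn
    ⟨x₀, mem_closedBall_self (by positivity)⟩ hu.abs.continuousOn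
  refine ⟨x, hx, fun y ↦ ?_⟩
  obtain ⟨v, hv⟩ := exists_dist_add_int_le y x₀
  rw [← hper y v]
  exact hmax hv

theorem measureReal_inter_ball_le_half {E : Type*} [NormedAddCommGroup E] [NormedSpace ℝ E]
    [FiniteDimensional ℝ E] [MeasurableSpace E] [BorelSpace E] {μ : Measure E}
    [μ.IsAddHaarMeasure] {F : Set E} {x x₀ : E} {ρ t : ℝ} (hρ : 0 < ρ) (ht : 1 / 2 ≤ t)
    (ht' : t ≤ 1) (hx : (1 - t) * dist x x₀ ≤ ρ)
    (hF : μ.real (F ∩ ball x₀ (2 * ρ)) ≤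
      (1 / 2) ^ (2 * Module.finrank ℝ E + 1) * μ.real (ball x₀ (2 * ρ))) :
    μ.real (F ∩ ball (x + t • (x₀ - x)) (t * ρ)) ≤
      1 / 2 * μ.real (ball (x + t • (x₀ - x)) (t * ρ)) := by
  have hsub : ball (x + t • (x₀ - x)) (t * ρ) ⊆ ball x₀ (2 * ρ) := by
    refine ball_subset_ball' ?_
    have hdist : dist (x + t • (x₀ - x)) x₀ = (1 - t) * dist x x₀ := by
      rw [dist_eq_norm, show x + t • (x₀ - x) - x₀ = (1 - t) • (x - x₀) by module, norm_smul,
        Real.norm_of_nonneg (sub_nonneg.2 ht'), ← dist_eq_norm]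
    nlinarith
  set d := Module.finrank ℝ E
  calc μ.real (F ∩ ball (x + t • (x₀ - x)) (t * ρ))
      ≤ μ.real (F ∩ ball x₀ (2 * ρ)) := measureReal_mono (Set.inter_subset_inter_right _ hsub)
        ((measure_mono Set.inter_subset_right).trans_lt measure_ball_lt_top).ne
    _ ≤ (1 / 2) ^ (2 * d + 1) * μ.real (ball x₀ (2 * ρ)) := hF
    _ = 1 / 2 * ((1 / 2 * ρ) ^ d * μ.real (ball 0 1)) := by
        have hhalf : (1 / 2 : ℝ) ^ (2 * d) * 2 ^ d = (1 / 2) ^ d := by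
          rw [two_mul, pow_add, mul_assoc, ← mul_pow]
          norm_num
        rw [measureReal_ball_eq (by positivity), pow_succ, mul_pow, mul_pow, ← hhalf]
        ring
    _ ≤ 1 / 2 * ((t * ρ) ^ d * μ.real (ball 0 1)) := by gcongr
    _ = 1 / 2 * μ.real (ball (x + t • (x₀ - x)) (t * ρ)) := by
        rw [measureReal_ball_eq (mul_pos (by linarith) hρ)]

theorem pow_div_factorial_le_half {B : ℝ} {k : ℕ} (hB : 0 ≤ B) (hk : k ≠ 0) (hBk : 6 * B ≤ k) :
    B ^ k / k.factorial ≤ 1 / 2 := by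
  have hk' : (0 : ℝ) < k := by positivity
  have hratio : B / k * exp 1 ≤ 1 / 2 := by
    have : B / k ≤ 1 / 6 := by rw [div_le_iff₀ hk']; linarith
    calc B / k * exp 1 ≤ 1 / 6 * 3 := by gcongr; linarith [exp_one_lt_d9]
      _ = 1 / 2 := by norm_num
  calc B ^ k / k.factorial = (B / k) ^ k * ((k : ℝ) ^ k / k.factorial) := by
        rw [div_pow]; field_simp
    _ ≤ (B / k) ^ k * exp k := by
        gcongr
        exact pow_div_factorial_le_exp _ hk'.le k
    _ = (B / k * exp 1) ^ k := by rw [mul_pow, ← exp_nat_mul, mul_one]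
    _ ≤ (1 / 2) ^ k := by gcongr
    _ ≤ 1 / 2 := pow_le_of_le_one (by norm_num) (by norm_num) hk

/-- The `p` largest elements of `puncturedNodes m`. -/
def lastNodes (m p : ℕ) : Finset ℤ := Finset.Icc (m - p + 1) m

theorem card_lastNodes (m p : ℕ) : (lastNodes m p).card = p := by
  rw [lastNodes, Int.card_Icc]
  omega

theorem lastNodes_subset_puncturedNodes {m p : ℕ} (hpm : 2 * p ≤ m) :
    lastNodes m p ⊆ puncturedNodes m := fun j hj ↦ by
  have := Finset.mem_Icc.1 hj
  exact mem_puncturedNodes.2 ⟨by omega, abs_le.2 (by omega)⟩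

theorem half_le_div_of_mem_lastNodes {m p : ℕ} (hpm : 2 * p ≤ m) {j : ℤ}
    (hj : j ∈ lastNodes m p) : 1 / 2 ≤ (j : ℝ) / m := by
  obtain ⟨hlow, hhigh⟩ := Finset.mem_Icc.1 hj
  have hm : (0 : ℝ) < m := by exact_mod_cast (by omega : 0 < m)
  have : (m : ℝ) ≤ 2 * j := by exact_mod_cast (by omega : (m : ℤ) ≤ 2 * j)
  rw [le_div_iff₀ hm]
  linarith

theorem div_le_one_of_mem_lastNodes {m p : ℕ} {j : ℤ} (hj : j ∈ lastNodes m p) :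
    (j : ℝ) / m ≤ 1 :=
  div_le_one_of_le₀ (by exact_mod_cast (Finset.mem_Icc.1 hj).2) m.cast_nonneg

theorem one_sub_div_le_of_mem_lastNodes {m p : ℕ} (hm : m ≠ 0) {j : ℤ} (hj : j ∈ lastNodes m p) :
    1 - (j : ℝ) / m ≤ p / m := by
  have hlow : ((m : ℤ) : ℝ) - p ≤ j := by
    exact_mod_cast (by have := Finset.mem_Icc.1 hj; omega : (m : ℤ) - p ≤ j)
  rw [sub_le_iff_le_add, ← add_div, one_le_div (by positivity)]
  push_cast at hlow
  linarith

variable {n : ℕ} {lam : ℝ} {u : EuclideanSpace ℝ (Fin n) → ℝ} {x₀ : EuclideanSpace ℝ (Fin n)}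

/- Extrapolate from the ball around `x₀`, where `|u| ≤ 1` on most points, to the global maximum
of `|u|`, which periodicity places within distance `√n`. -/
theorem IsUnitNodalPeak.abs_le_two_mul_pow (h : IsUnitNodalPeak u x₀) (hlam : 0 < lam)
    (hu : IsSmoothEigenfunction lam u) (hper : ZnPeriodic n u) {ρ : ℝ} (hρ : 0 < ρ) (hρ' : ρ ≤ 1)
    (hlρ : 8 * 2 ^ n * (lam * (2 * ρ) ^ 2) ≤ (1 / 2) ^ (2 * n + 1)) {p m : ℕ}
    (hp : 12 * (gradConst n * (√n + 1) * √lam) ≤ p) (hpm : 2 * p ≤ m)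
    (hpρ : p * √n ≤ m * ρ) (y : EuclideanSpace ℝ (Fin n)) :
    |u y| ≤ 2 * (2 * m : ℝ) ^ (2 * m + 1) := by
  obtain ⟨x, hx, hmax⟩ := exists_forall_abs_le_of_znPeriodic hu.continuous hper x₀
  have hC := one_le_gradConst n
  have := sqrt_pos.2 hlam
  set B := gradConst n * (√n + 1) * √lam with hB
  have hB0 : 0 < B := by positivity
  have hp0 : p ≠ 0 := fun h0 ↦ by rw [h0, Nat.cast_zero] at hp; linarith
  have hm : (1 : ℝ) ≤ m := by exact_mod_cast (by omega : 1 ≤ m)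
  have hvol := h.volume_inter_ball_le hlam.le hu (by positivity : 0 < 2 * ρ)
  obtain ⟨k, hkp, hk, hux⟩ := exists_abs_le_of_volume_inter_le hlam.le hu (x := x) (a := x₀)
    (r := 1 / √lam) hρ (by positivity)
    (by rw [div_pow, sq_sqrt hlam.le, one_pow, mul_one_div_cancel hlam.ne']) (m := m) (by omega)
    (fun y _ ↦ hmax y) (lastNodes_subset_puncturedNodes hpm) (W := fun _ ↦ 1 / 2) fun j hj ↦ by
      have ht := half_le_div_of_mem_lastNodes hpm hj
      rw [abs_of_nonneg (by linarith)]
      refine measureReal_inter_ball_le_half hρ ht (div_le_one_of_mem_lastNodes hj) ?_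
        (by rw [finrank_euclideanSpace_fin]; exact hvol.trans (by gcongr))
      calc (1 - (j : ℝ) / m) * dist x x₀ ≤ p / m * √n := by
            gcongr
            exact one_sub_div_le_of_mem_lastNodes (by omega) hj
        _ ≤ ρ := by rw [div_mul_eq_mul_div, div_le_iff₀ (by linarith)]; linarith
  simp only [card_lastNodes, Finset.sum_const, nsmul_eq_mul] at hk hkp
  have hk6 : 6 * B ≤ k := by linarith
  have hk0 : k ≠ 0 := fun h0 ↦ by rw [h0, Nat.cast_zero] at hk6; linarith
  have hbase : gradConst n * ((dist x₀ x + ρ) / (1 / √lam)) ≤ B := by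
    rw [div_div_eq_mul_div, div_one, ← mul_assoc, hB, dist_comm]
    gcongr
  have herr : (gradConst n * ((dist x₀ x + ρ) / (1 / √lam))) ^ k * |u x| / k.factorial ≤
      1 / 2 * |u x| := by
    rw [mul_div_right_comm]
    exact mul_le_mul_of_nonneg_right (le_trans (by gcongr)
      (pow_div_factorial_le_half hB0.le hk0 hk6)) (abs_nonneg _)
  have hpow : (2 * m : ℝ) ^ (2 * m - k + 1) ≤ (2 * m) ^ (2 * m + 1) :=
    pow_le_pow_right₀ (by linarith) (by omega)
  linarith [hmax y]

theorem two_mul_pow_le_exp {m : ℕ} (hm : m ≠ 0) :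
    2 * (2 * m : ℝ) ^ (2 * m + 1) ≤ exp (7 * m ^ 2) := by
  have hm' : (1 : ℝ) ≤ m := by exact_mod_cast Nat.one_le_iff_ne_zero.2 hm
  calc 2 * (2 * m : ℝ) ^ (2 * m + 1) ≤ exp 1 * exp (2 * m) ^ (2 * m + 1) := by
        gcongr
        · linarith [add_one_le_exp (1 : ℝ)]
        · linarith [add_one_le_exp (2 * m : ℝ)]
    _ = exp (1 + (2 * m + 1) * (2 * m)) := by
        rw [← exp_nat_mul, ← exp_add]
        push_cast
        rfl
    _ ≤ exp (7 * m ^ 2) := exp_le_exp.2 (by nlinarith)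

/- `ρ = √(c / lam)`, `p = ⌈B √lam⌉` and `m = ⌈p (D + 2) / ρ⌉`. -/
theorem exists_ray_parameters {c B D : ℝ} (hc : 0 < c) (hc' : c ≤ 1) (hB : 1 ≤ B) (hD : 0 ≤ D) :
    ∃ K : ℝ, 1 ≤ K ∧ ∀ lam, 1 ≤ lam → ∃ (ρ : ℝ) (p m : ℕ), 0 < ρ ∧ ρ ≤ 1 ∧ lam * ρ ^ 2 = c ∧
      B * √lam ≤ p ∧ 2 * p ≤ m ∧ p * D ≤ m * ρ ∧ m ≠ 0 ∧ m ≤ K * lam := by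
  have := sqrt_pos.2 hc
  refine ⟨2 * B * (D + 2) / √c + 1, by rw [le_add_iff_nonneg_left]; positivity, fun lam hlam ↦ ?_⟩
  have hsl : 1 ≤ √lam := one_le_sqrt.2 hlam
  have hρ0 : 0 < √c / √lam := by positivity
  have hρ1 : √c / √lam ≤ 1 := div_le_one_of_le₀ (sqrt_le_sqrt (hc'.trans hlam)) (by positivity)
  have hp := Nat.le_ceil (B * √lam)
  have hp' : (⌈B * √lam⌉₊ : ℝ) ≤ 2 * B * √lam := by
    nlinarith [Nat.ceil_lt_add_one (by positivity : 0 ≤ B * √lam)]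
  set p := ⌈B * √lam⌉₊
  have hp1 : (1 : ℝ) ≤ p := by nlinarith
  have hm := Nat.le_ceil (p * (D + 2) / (√c / √lam))
  have hm' := Nat.ceil_lt_add_one (by positivity : 0 ≤ p * (D + 2) / (√c / √lam))
  set m := ⌈p * (D + 2) / (√c / √lam)⌉₊
  rw [div_le_iff₀ hρ0] at hm
  have hmρ : m * (√c / √lam) ≤ m := mul_le_of_le_one_right m.cast_nonneg hρ1
  have h2p : (2 * p : ℝ) ≤ m := by nlinarith
  refine ⟨√c / √lam, p, m, hρ0, hρ1, ?_, hp, by exact_mod_cast h2p, by nlinarith, ?_, ?_⟩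
  · rw [div_pow, sq_sqrt hc.le, sq_sqrt (by linarith)]
    field_simp
  · rintro hm0
    rw [hm0, Nat.cast_zero] at h2p
    linarith
  · calc (m : ℝ) ≤ 2 * B * √lam * (D + 2) / (√c / √lam) + lam := by
          refine hm'.le.trans ?_
          gcongr
      _ = 2 * B * (D + 2) / √c * (√lam * √lam) + lam := by field_simp
      _ = (2 * B * (D + 2) / √c + 1) * lam := by rw [mul_self_sqrt (by linarith)]; ring

theorem exists_forall_abs_le_exp_mul_sq (n : ℕ) : ∃ K : ℝ, 1 ≤ K ∧ ∀ lam, 1 ≤ lam →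
    ∀ u : EuclideanSpace ℝ (Fin n) → ℝ, IsSmoothEigenfunction lam u → ZnPeriodic n u →
      ∀ x₀, IsUnitNodalPeak u x₀ → ∀ y, |u y| ≤ exp (K * lam ^ 2) := by
  have hC := one_le_gradConst n
  have hn := sqrt_nonneg (n : ℝ)
  obtain ⟨K, hK, hparam⟩ := exists_ray_parameters (c := (1 / 2) ^ (2 * n + 1) / (32 * 2 ^ n))
    (B := 12 * (gradConst n * (√n + 1))) (D := √n) (by positivity)
    (div_le_one_of_le₀ ((pow_le_one₀ (by norm_num) (by norm_num)).trans
      (by linarith [one_le_pow₀ (one_le_two (α := ℝ)) (n := n)])) (by positivity))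
    (by nlinarith) hn
  refine ⟨7 * K ^ 2, by nlinarith, fun lam hlam u hu hper x₀ h y ↦ ?_⟩
  obtain ⟨ρ, p, m, hρ, hρ', hlρ, hp, hpm, hpρ, hm, hmK⟩ := hparam lam hlam
  have hlρ' : 8 * 2 ^ n * (lam * (2 * ρ) ^ 2) = (1 / 2) ^ (2 * n + 1) := by
    rw [eq_div_iff (by positivity)] at hlρ
    rw [← hlρ]
    ring
  calc |u y| ≤ 2 * (2 * m : ℝ) ^ (2 * m + 1) :=
        h.abs_le_two_mul_pow (zero_lt_one.trans_le hlam) hu hper hρ hρ' hlρ'.le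
          (by rwa [← mul_assoc]) hpm hpρ y
    _ ≤ exp (7 * m ^ 2) := two_mul_pow_le_exp hm
    _ ≤ exp (7 * (K * lam) ^ 2) := by gcongr
    _ = exp (7 * K ^ 2 * lam ^ 2) := by rw [mul_pow, mul_assoc]

end GlobalBound

section PositivityRadius

theorem eventually_one_add_two_mul_log_le (m : ℕ) :
    ∀ᶠ L : ℝ in atTop, 1 + 2 * log (4 * L ^ m) ≤ L := by
  filter_upwards [isLittleO_log_id_atTop.bound (by positivity : (0 : ℝ) < 1 / (4 * (m + 1))),
    eventually_ge_atTop (2 * (1 + 2 * log 4)), eventually_ge_atTop 1] with L hlog hL4 hL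
  rw [Real.norm_of_nonneg (log_nonneg hL), id, Real.norm_of_nonneg (by linarith),
    one_div_mul_eq_div, le_div_iff₀ (by positivity)] at hlog
  rw [log_mul (by norm_num) (by positivity), log_pow]
  linarith [log_nonneg hL]

/-- At the radius `startConst n / (L ^ (n + 1) * √lam)` the volume bound for `{1 < |u|}` is small
enough to start the iteration with ratio `L`. -/
def startConst (n : ℕ) : ℝ := rayConst n ^ n * (1 / 8) ^ (n + 1) / (8 * 2 ^ n)

theorem startConst_pos (n : ℕ) : 0 < startConst n := by
  have := rayConst_pos n
  unfold startConst
  positivity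

theorem startConst_le_one (n : ℕ) : startConst n ≤ 1 := by
  have hκ : rayConst n ^ n ≤ 1 :=
    pow_le_one₀ (rayConst_pos n).le (by linarith [rayConst_le n])
  have h2 : (1 : ℝ) ≤ 2 ^ n := one_le_pow₀ one_le_two
  refine div_le_one_of_le₀ ?_ (by positivity)
  have := mul_le_one₀ hκ (by positivity) (pow_le_one₀ (n := n + 1) (by norm_num : (0 : ℝ) ≤ 1 / 8)
    (by norm_num))
  linarith

variable {n : ℕ} {lam : ℝ} {u : EuclideanSpace ℝ (Fin n) → ℝ} {x₀ : EuclideanSpace ℝ (Fin n)}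

theorem mul_startConst_sq_le (hlam : 0 < lam) {L : ℝ} (hL : 0 < L) :
    8 * 2 ^ n * (lam * (startConst n / (L ^ (n + 1) * √lam)) ^ 2) ≤
      rayConst n ^ n * (1 / (8 * L ^ 2)) ^ (n + 1) := by
  have hc := startConst_pos n
  calc 8 * 2 ^ n * (lam * (startConst n / (L ^ (n + 1) * √lam)) ^ 2)
      = 8 * 2 ^ n * (startConst n ^ 2 / (L ^ (n + 1)) ^ 2) := by
        rw [div_pow, mul_pow, sq_sqrt hlam.le]
        field_simp
    _ ≤ 8 * 2 ^ n * (startConst n / (L ^ (n + 1)) ^ 2) := by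
        gcongr
        exact pow_le_of_le_one hc.le (startConst_le_one n) two_ne_zero
    _ = rayConst n ^ n * (1 / (8 * L ^ 2)) ^ (n + 1) := by
        rw [startConst, ← one_div_mul_one_div, mul_pow (1 / 8), one_div_pow (L ^ 2), ← pow_mul,
          ← pow_mul, mul_comm 2]
        field_simp

theorem IsUnitNodalPeak.pos_of_mem_ball (h : IsUnitNodalPeak u x₀) (hlam : 0 < lam)
    (hu : IsSmoothEigenfunction lam u) {L : ℝ} {I : ℕ} (hL : 1 ≤ L)
    (hglob : ∀ y, |u y| ≤ exp (L ^ (I + 1))) (hlog : 1 + 2 * log (4 * L ^ (I + 1)) ≤ L)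
    {y : EuclideanSpace ℝ (Fin n)}
    (hy : y ∈ ball x₀ (startConst n / (2 ^ (I + 8) * gradConst n * L ^ (n + 3) * √lam))) :
    0 < u y := by
  have := sqrt_pos.2 hlam
  have hc := startConst_pos n
  have hC := one_le_gradConst n
  set R := startConst n / (L ^ (n + 1) * √lam) with hR
  have hR0 : 0 < R := by positivity
  have hRL := mul_startConst_sq_le (n := n) hlam (zero_lt_one.trans_le hL)
  have hRdiv : R / 2 ^ (I + 1) ≤ R := div_le_self hR0.le (one_le_pow₀ one_le_two)
  have hlR : lam * (R / 2 ^ (I + 1)) ^ 2 ≤ 1 :=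
    le_trans (by gcongr) (mul_sq_le_one_of_rayConst_bound hL hRL)
  refine pos_of_abs_le hlam.le hu h.eq_one (by positivity) hlR
    (fun x ↦ h.abs_le_mul_sq hlam.le hu hR0 hL hRL hglob hlog) ?_
  convert hy using 2
  rw [hR, pow_add 2 I 8, pow_add 2 I 1, pow_add L n 3, pow_add L n 1]
  field_simp
  norm_num

theorem exists_forall_pos_of_isUnitNodalPeak (n : ℕ) {ε : ℝ} (hε : 0 < ε) :
    ∃ a, 0 < a ∧ ∀ lam, 1 ≤ lam → ∀ u : EuclideanSpace ℝ (Fin n) → ℝ,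
      IsSmoothEigenfunction lam u → ZnPeriodic n u → ∀ x₀, IsUnitNodalPeak u x₀ →
        ∀ y ∈ ball x₀ (a * lam ^ (-(1 : ℝ) / 2 - ε)), 0 < u y := by
  obtain ⟨K, hK, hglob⟩ := exists_forall_abs_le_exp_mul_sq n
  set δ := ε / (n + 3) with hδ
  have hδ0 : 0 < δ := by positivity
  obtain ⟨I, hI⟩ := exists_nat_ge (3 / δ)
  rw [div_le_iff₀ hδ0] at hI
  obtain ⟨Λ, hΛ⟩ := eventually_atTop.1 (((tendsto_rpow_atTop hδ0).eventually
    (eventually_one_add_two_mul_log_le (I + 1))).and (eventually_ge_atTop K))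
  have hΛK : K ≤ Λ := (hΛ Λ le_rfl).2
  have hΛ0 : 0 < Λ := by linarith
  have hc := startConst_pos n
  have hC := one_le_gradConst n
  refine ⟨startConst n / (2 ^ (I + 8) * gradConst n * Λ ^ ε), by positivity,
    fun lam hlam u hu hper x₀ h y hy ↦ ?_⟩
  have hlam0 : 0 < lam := by linarith
  have ht : lam ≤ Λ * lam := le_mul_of_one_le_left hlam0.le (hK.trans hΛK)
  have hΛt : Λ ≤ Λ * lam := le_mul_of_one_le_right hΛ0.le hlam
  have ht1 : 1 ≤ Λ * lam := hlam.trans ht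
  refine h.pos_of_mem_ball hlam0 hu (one_le_rpow ht1 hδ0.le) (I := I) (fun z ↦ ?_)
    (hΛ _ hΛt).1 ?_
  · refine (hglob lam hlam u hu hper x₀ h z).trans (exp_le_exp.2 ?_)
    calc K * lam ^ 2 ≤ (Λ * lam) * (Λ * lam) ^ 2 := by gcongr; exact hΛK.trans hΛt
      _ = (Λ * lam) ^ (3 : ℝ) := by norm_cast; ring
      _ ≤ (Λ * lam) ^ (δ * (I + 1 : ℕ)) :=
        rpow_le_rpow_of_exponent_le ht1 (by push_cast; linarith)
      _ = ((Λ * lam) ^ δ) ^ (I + 1) := rpow_mul_natCast (by positivity) _ _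
  · have hpow : ((Λ * lam) ^ δ) ^ (n + 3) = Λ ^ ε * lam ^ ε := by
      rw [← rpow_mul_natCast (by positivity), ← mul_rpow hΛ0.le hlam0.le, hδ]
      push_cast
      rw [div_mul_cancel₀ _ (by positivity)]
    have hsqrt : lam ^ (-(1 : ℝ) / 2) = 1 / √lam := by
      rw [neg_div, rpow_neg hlam0.le, ← sqrt_eq_rpow, one_div]
    convert hy using 2
    rw [hpow, rpow_sub hlam0, hsqrt]
    field_simp

end PositivityRadius

section NodalDomain

variable {n : ℕ} {lam : ℝ} {u : EuclideanSpace ℝ (Fin n) → ℝ}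

theorem exists_lap_nonneg_of_forall_le {x : EuclideanSpace ℝ (Fin n)} (hu : ContDiff ℝ 2 u)
    (hx : ∀ y, u x ≤ u y) : ∃ y, 0 ≤ lap n u y := by
  by_contra! hneg
  obtain ⟨s, ⟨hs, -⟩, hmv⟩ := exists_integral_comp_mul_ballBump_eq 0 hu x one_pos
  have hcont : Continuous fun z ↦ -lap n u (x + s • z) :=
    ((continuous_lap hu).comp (by fun_prop)).neg
  have hlap : 0 < ∫ z, -lap n u (x + s • z) * ballBump (0 + 2) z :=
    (hcont.mul (continuous_ballBump _)).integral_pos_of_hasCompactSupport_nonneg_nonzero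
      (hasCompactSupport_ballBump 1).mul_left
      (fun z ↦ mul_nonneg (neg_pos.2 (hneg _)).le (ballBump_nonneg _ _)) (x := 0)
      (by simpa [ballBump, truncPow] using (hneg x).ne)
  have hmean : (∫ z : EuclideanSpace ℝ (Fin n), ballBump (0 + 1) z) * u x ≤
      ∫ z, u (x + (1 : ℝ) • z) * ballBump (0 + 1) z := by
    rw [mul_comm, ← integral_const_mul]
    exact integral_mono (integrable_mul_ballBump _ continuous_const)
      (integrable_mul_ballBump _ (hu.continuous.comp (by fun_prop)))
      fun z ↦ mul_le_mul_of_nonneg_right (hx _) (ballBump_nonneg _ _)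
  simp only [neg_mul, integral_neg] at hlap
  have := mul_pos hs hlap
  push_cast at hmv
  linarith

/- Otherwise `u`, made positive by a scaling, would be strictly superharmonic at its minimum. -/
theorem IsSmoothEigenfunction.exists_eq_zero (hlam : 0 < lam) (hu : IsSmoothEigenfunction lam u)
    (hper : ZnPeriodic n u) : ∃ y, u y = 0 := by
  by_contra! hne
  obtain ⟨x, -, hmin⟩ := exists_forall_abs_le_of_znPeriodic (u := fun y ↦ (u y)⁻¹)
    (hu.continuous.inv₀ hne) (fun y v ↦ congrArg (·⁻¹) (hper y v)) 0
  simp only [abs_inv, inv_le_inv₀ (abs_pos.2 (hne _)) (abs_pos.2 (hne _))] at hmin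
  have hw := hu.const_mul (u x)
  have hpos (y) : 0 < u x * u y := by
    by_contra! hy
    obtain ⟨z, hz⟩ := mem_range_of_exists_le_of_exists_ge hw.continuous ⟨y, hy⟩
      ⟨x, mul_self_nonneg (u x)⟩
    exact mul_ne_zero (hne x) (hne z) hz
  obtain ⟨y, hy⟩ := exists_lap_nonneg_of_forall_le hw.contDiff_two (x := x) fun y ↦ by
    rw [← abs_of_pos (hpos x), ← abs_of_pos (hpos y), abs_mul, abs_mul]
    exact mul_le_mul_of_nonneg_left (hmin y) (abs_nonneg _)
  rw [hw.lap_eq] at hy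
  nlinarith [hpos y]

theorem le_sqrt_of_ball_subset_ne_zero (hper : ZnPeriodic n u)
    (hzero : ∃ y, u y = 0) {c : EuclideanSpace ℝ (Fin n)} {ρ : ℝ}
    (hball : ball c ρ ⊆ {y | u y ≠ 0}) : ρ ≤ √n := by
  obtain ⟨y, hy⟩ := hzero
  obtain ⟨v, hv⟩ := exists_dist_add_int_le y c
  by_contra! hlt
  exact hball (mem_ball.2 (hv.trans_lt hlt)) ((hper y v).trans hy)

theorem add_mem_connectedComponentIn {E : Type*} [NormedAddCommGroup E] [NormedSpace ℝ E]
    {F : Set E} {w x y z : E} {r : ℝ} (hF : ∀ p ∈ F, p + w ∈ F) (hball : ball y r ⊆ F)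
    (hz : z ∈ ball y r) (hzw : z + w ∈ connectedComponentIn F x) :
    y + w ∈ connectedComponentIn F x := by
  have hsub : (· + w) '' ball y r ⊆ F := by
    rintro _ ⟨p, hp, rfl⟩
    exact hF p (hball hp)
  have hconn : IsPreconnected ((· + w) '' ball y r) :=
    (convex_ball y r).isPreconnected.image _ (by fun_prop)
  rw [connectedComponentIn_eq hzw]
  exact hconn.subset_connectedComponentIn ⟨z, hz, rfl⟩ hsub
    ⟨y, mem_ball_self (pos_of_mem_ball hz), rfl⟩

/- Translating the nodal domain into a fixed ball gives compactness; a limit of translates at which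
`|u|` is maximal is interior to `{u ≠ 0}`, hence lies in a translate of the nodal domain. -/
theorem IsNodalDomain.exists_forall_abs_le (hu : Continuous u) (hper : ZnPeriodic n u)
    {Ω : Set (EuclideanSpace ℝ (Fin n))} (hΩ : IsNodalDomain u Ω) :
    ∃ x₀ ∈ Ω, ∀ y ∈ Ω, |u y| ≤ |u x₀| := by
  obtain ⟨x, hx, rfl⟩ := hΩ
  set Ω := connectedComponentIn {y | u y ≠ 0} x
  let W (v : Fin n → ℤ) : EuclideanSpace ℝ (Fin n) := WithLp.toLp 2 fun i ↦ (v i : ℝ)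
  have hW (v y) : u (y + W v) = u y := hper y v
  have hWneg (v) : W (-v) = -W v := by ext i; simp [W]
  let T : Set (EuclideanSpace ℝ (Fin n)) := {z | z ∈ closedBall 0 √n ∧ ∃ v, z + W v ∈ Ω}
  have hT : ∀ y ∈ Ω, ∃ z ∈ T, u z = u y := fun y hy ↦ by
    obtain ⟨v, hv⟩ := exists_dist_add_int_le y 0
    exact ⟨y + W v, ⟨hv, -v, by rwa [hWneg, add_neg_cancel_right]⟩, hW v y⟩
  have hcompact : IsCompact (closure T) :=
    (isCompact_closedBall _ _).closure_of_subset fun z hz ↦ hz.1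
  obtain ⟨z₀, hz₀, -⟩ := hT x (mem_connectedComponentIn hx)
  obtain ⟨z₁, hz₁, hmax⟩ :=
    hcompact.exists_isMaxOn ⟨z₀, subset_closure hz₀⟩ hu.abs.continuousOn
  have hle : ∀ y ∈ Ω, |u y| ≤ |u z₁| := fun y hy ↦ by
    obtain ⟨z, hz, hzu⟩ := hT y hy
    exact hzu ▸ hmax (subset_closure hz)
  have hz₁0 : u z₁ ≠ 0 :=
    abs_pos.1 ((abs_pos.2 hx).trans_le (hle x (mem_connectedComponentIn hx)))
  obtain ⟨r, hr, hball⟩ := Metric.isOpen_iff.1 (isOpen_ne_fun hu continuous_const) z₁ hz₁0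
  obtain ⟨z, ⟨-, v, hzv⟩, hz⟩ := Metric.mem_closure_iff.1 hz₁ r hr
  refine ⟨z₁ + W v, add_mem_connectedComponentIn (fun p hp ↦ ?_) hball (mem_ball'.2 hz) hzv,
    fun y hy ↦ (hW v z₁).symm ▸ hle y hy⟩
  exact (hW v p).trans_ne hp

theorem isUnitNodalPeak_inv_mul {x₀ : EuclideanSpace ℝ (Fin n)} (hx₀ : u x₀ ≠ 0)
    (hmax : ∀ y ∈ connectedComponentIn {y | u y ≠ 0} x₀, |u y| ≤ |u x₀|) :
    IsUnitNodalPeak (fun y ↦ (u x₀)⁻¹ * u y) x₀ where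
  eq_one := inv_mul_cancel₀ hx₀
  le_one y hy := by
    have hset : {y | (u x₀)⁻¹ * u y ≠ 0} = {y | u y ≠ 0} := by ext; simp [hx₀]
    rw [hset] at hy
    refine (le_abs_self _).trans ?_
    rw [abs_mul, abs_inv, inv_mul_eq_div]
    exact div_le_one_of_le₀ (hmax y hy) (abs_nonneg _)

theorem le_innerRadius_of_ball_subset {Ω : Set (EuclideanSpace ℝ (Fin n))}
    {c : EuclideanSpace ℝ (Fin n)} {ρ : ℝ} (hlam : 0 < lam) (hu : IsSmoothEigenfunction lam u)
    (hper : ZnPeriodic n u) (hΩ : Ω ⊆ {y | u y ≠ 0}) (hρ : 0 < ρ) (hball : ball c ρ ⊆ Ω) :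
    ρ ≤ innerRadius Ω :=
  le_csSup ⟨√n, fun _ ⟨_, _, hc⟩ ↦
    le_sqrt_of_ball_subset_ne_zero hper (hu.exists_eq_zero hlam hper) (hc.trans hΩ)⟩ ⟨hρ, c, hball⟩

end NodalDomain

section Density

theorem fullDensity_of_eventually_mem {S : Set ℕ} (hS : ∀ᶠ j in atTop, j ∈ S) : FullDensity S := by
  obtain ⟨N₀, hN₀⟩ := eventually_atTop.1 hS
  have hlower (N : ℕ) : (N : ℝ) - N₀ ≤ Nat.card ↥(S ∩ Set.Icc 1 N) := by
    have hsub : Set.Ioc N₀ N ⊆ S ∩ Set.Icc 1 N := fun j hj ↦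
      ⟨hN₀ j hj.1.le, by have := hj.1; omega, hj.2⟩
    have hcard := Set.ncard_le_ncard hsub ((Set.finite_Icc 1 N).inter_of_right S)
    rw [← Finset.coe_Ioc, Set.ncard_coe_finset, Nat.card_Ioc] at hcard
    rw [Nat.card_coe_set_eq, sub_le_iff_le_add]
    exact_mod_cast Nat.sub_le_iff_le_add.1 hcard
  have hupper (N : ℕ) : Nat.card ↥(S ∩ Set.Icc 1 N) ≤ N := by
    have hcard := Set.ncard_le_ncard (Set.inter_subset_right : S ∩ Set.Icc 1 N ⊆ _)
      (Set.finite_Icc 1 N)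
    rwa [← Finset.coe_Icc, Set.ncard_coe_finset, Nat.card_Icc, add_tsub_cancel_right,
      Finset.coe_Icc, ← Nat.card_coe_set_eq] at hcard
  have hlim : Tendsto (fun N : ℕ ↦ 1 - (N₀ : ℝ) / N) atTop (nhds 1) := by
    simpa using (tendsto_const_div_atTop_nhds_zero_nat (N₀ : ℝ)).const_sub 1
  refine tendsto_of_tendsto_of_tendsto_of_le_of_le' hlim tendsto_const_nhds ?_
    (.of_forall fun N ↦ div_le_one_of_le₀ (by exact_mod_cast hupper N) N.cast_nonneg)
  filter_upwards [eventually_ne_atTop 0] with N hN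
  rw [one_sub_div (by exact_mod_cast hN)]
  exact div_le_div_of_nonneg_right (hlower N) N.cast_nonneg

end Density

theorem toral_inner_radius_full_density_general (n : ℕ) {ε : ℝ} (hε : 0 < ε) :
    ∃ a, 0 < a ∧ ∀ lam, 1 ≤ lam → ∀ u : EuclideanSpace ℝ (Fin n) → ℝ,
      IsSmoothEigenfunction lam u → ZnPeriodic n u → ∀ Ω, IsNodalDomain u Ω →
        a * lam ^ (-(1 : ℝ) / 2 - ε) ≤ innerRadius Ω := by
  obtain ⟨a, ha, hpos⟩ := exists_forall_pos_of_isUnitNodalPeak n hε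
  refine ⟨a, ha, fun lam hlam u hu hper Ω hΩ ↦ ?_⟩
  have hlam0 : 0 < lam := zero_lt_one.trans_le hlam
  obtain ⟨x₀, hx₀, hmax⟩ := hΩ.exists_forall_abs_le hu.continuous hper
  obtain ⟨x, -, rfl⟩ := hΩ
  have hux₀ : u x₀ ≠ 0 := connectedComponentIn_subset _ _ hx₀
  rw [connectedComponentIn_eq hx₀] at hmax ⊢
  have hball := hpos lam hlam _ (hu.const_mul (u x₀)⁻¹)
    (fun y v ↦ congrArg ((u x₀)⁻¹ * ·) (hper y v)) x₀ (isUnitNodalPeak_inv_mul hux₀ hmax)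
  have hr : 0 < a * lam ^ (-(1 : ℝ) / 2 - ε) := by positivity
  exact le_innerRadius_of_ball_subset hlam0 hu hper (connectedComponentIn_subset _ _) hr
    ((convex_ball _ _).isPreconnected.subset_connectedComponentIn (mem_ball_self hr)
      fun y hy ↦ right_ne_zero_of_mul (hball y hy).ne')

theorem toral_inner_radius_full_density
    (n : ℕ) (hn : 3 ≤ n)
    (ψ : ℕ → EuclideanSpace ℝ (Fin n) → ℝ) (lam : ℕ → ℝ)
    (hsmooth : ∀ j, ContDiff ℝ (⊤ : ℕ∞) (ψ j)) (hper : ∀ j, ZnPeriodic n (ψ j))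
    (heig : ∀ j x, lap n (ψ j) x = -(lam j) * ψ j x)
    (hlam : Tendsto lam atTop atTop)
    (hON : ∀ i j, (∫ x in fundDom n, ψ i x * ψ j x) = if i = j then 1 else 0)
    (hcomplete : ∀ f : EuclideanSpace ℝ (Fin n) → ℝ,
      MemLp f 2 (volume.restrict (fundDom n)) →
      (∀ j, (∫ x in fundDom n, f x * ψ j x) = 0) →
      f =ᵐ[volume.restrict (fundDom n)] 0)
    (ε : ℝ) (hε : 0 < ε) :
    ∃ a₁ : ℝ, 0 < a₁ ∧ ∃ S : Set ℕ, FullDensity S ∧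
      ∀ j ∈ S, ∀ Ω, IsNodalDomain (ψ j) Ω →
        a₁ * lam j ^ (-(1:ℝ)/2 - ((n:ℝ)-2)^2/(4*(n:ℝ)) - ε) ≤ innerRadius Ω := by
  obtain ⟨a, ha, h⟩ := toral_inner_radius_full_density_general n hε
  refine ⟨a, ha, {j | 1 ≤ lam j}, fullDensity_of_eventually_mem (hlam.eventually_ge_atTop 1),
    fun j hj Ω hΩ ↦ le_trans ?_ (h (lam j) hj (ψ j) ⟨hsmooth j, heig j⟩ (hper j) Ω hΩ)⟩
  have hexp : 0 ≤ ((n : ℝ) - 2) ^ 2 / (4 * n) := by positivity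
  exact mul_le_mul_of_nonneg_left (rpow_le_rpow_of_exponent_le hj (by linarith)) ha.le
end
end

section
/- Let n ≥ 1 and let (ψ_j)_{j∈S} be a sequence of smooth ℤⁿ-periodic real-valued functions on ℝⁿ with ∫_{[0,1)ⁿ} ψ_j² dx = 1, indexed by λ_j → ∞, such that for some R₀ > 0, for every r ∈ (0, R₀) and every x ∈ ℝⁿ, ∫_{B_r(x)} ψ_j² dx → Vol(B_r(x)) as j → ∞ (pointwise in x and r). Then there exist K₁, K₂ > 0 and r₀ > 0, with K₁, K₂ independent of r, j and x, such that for each r ∈ (0, r₀) there exists Λ_r with: for all j with λ_j ≥ Λ_r and all x ∈ ℝⁿ, K₁ rⁿ ≤ ∫_{B_r(x)} ψ_j² dx ≤ K₂ rⁿ. -/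
open MeasureTheory Metric Filter Real

noncomputable section

/-!
For each radius `r`, compactness of the torus upgrades the pointwise limits to bounds uniform in the
centre: finitely many balls of radius `r / 2` cover a fundamental domain of `ℤⁿ`, and if `x` lies
within `r / 2` of a centre `c`, then `B_{r/2}(c) ⊆ B_r(x) ⊆ B_{2r}(c)`. Equidistribution at the
finitely many `c` bounds the masses of the two comparison balls up to a factor `2`, and their Haar
volumes are `2^{∓n}` times that of `B_r(x)`. Invariance under `ℤⁿ` moves an arbitrary centre into
the fundamental domain.
-/

open Module
open scoped Topology

section UniformBallBounds

variable {X : Type*} [PseudoMetricSpace X] {D : Set X} {ι : Type*} {l : Filter ι}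

theorem eventually_forall_exists_dist_lt (hD : TotallyBounded D) {p : ι → X → Prop}
    (hp : ∀ c, ∀ᶠ j in l, p j c) {ε : ℝ} (hε : 0 < ε) :
    ∀ᶠ j in l, ∀ x ∈ D, ∃ c, dist x c < ε ∧ p j c := by
  obtain ⟨t, ht_finite, ht_cover⟩ := Metric.totallyBounded_iff.mp hD ε hε
  filter_upwards [(eventually_all_finite ht_finite).mpr fun c _ => hp c] with j hj x hx
  obtain ⟨c, hc, hxc⟩ := Set.mem_iUnion₂.mp (ht_cover hx)
  exact ⟨c, hxc, hj c hc⟩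

variable [MeasurableSpace X] {G : Type*} [AddGroup G] [AddAction G X] [IsIsometricVAdd G X]

theorem measureReal_ball_vadd (ν : Measure X) [VAddInvariantMeasure G X ν] (g : G) (x : X)
    (r : ℝ) : ν.real (ball (g +ᵥ x) r) = ν.real (ball x r) := by
  rw [← vadd_ball, measureReal_def, measure_vadd, measureReal_def]

variable [ProperSpace X] {ν : ι → Measure X} [∀ j, IsFiniteMeasureOnCompacts (ν j)]
  [∀ j, VAddInvariantMeasure G X (ν j)]

theorem eventually_forall_measureReal_ball_mem_Icc (hD : Bornology.IsBounded D)
    (hGD : ∀ x, ∃ g : G, g +ᵥ x ∈ D) {a b s r t : ℝ} (hsr : s < r) (hrt : r < t)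
    (hlower : ∀ c, ∀ᶠ j in l, a ≤ (ν j).real (ball c s))
    (hupper : ∀ c, ∀ᶠ j in l, (ν j).real (ball c t) ≤ b) :
    ∀ᶠ j in l, ∀ x, (ν j).real (ball x r) ∈ Set.Icc a b := by
  have hD : TotallyBounded D := hD.isCompact_closure.totallyBounded.subset subset_closure
  have hε : 0 < min (r - s) (t - r) := lt_min (sub_pos.mpr hsr) (sub_pos.mpr hrt)
  filter_upwards [eventually_forall_exists_dist_lt hD (fun c => (hlower c).and (hupper c)) hε]
    with j hj x
  obtain ⟨g, hg⟩ := hGD x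
  obtain ⟨c, hdist, ha, hb⟩ := hj (g +ᵥ x) hg
  obtain ⟨hdist_s, hdist_t⟩ := lt_min_iff.mp hdist
  have hinner : ball c s ⊆ ball (g +ᵥ x) r := ball_subset_ball' (by rw [dist_comm]; linarith)
  have houter : ball (g +ᵥ x) r ⊆ ball c t := ball_subset_ball' (by linarith)
  rw [← measureReal_ball_vadd (ν j) g x r]
  exact ⟨ha.trans (measureReal_mono hinner measure_ball_lt_top.ne),
    (measureReal_mono houter measure_ball_lt_top.ne).trans hb⟩

end UniformBallBounds

section Haar

variable {E : Type*} [NormedAddCommGroup E] [NormedSpace ℝ E] [FiniteDimensional ℝ E]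
  [MeasurableSpace E] [BorelSpace E] (μ : Measure E) [μ.IsAddHaarMeasure]

theorem addHaar_real_ball_of_pos (x : E) {r : ℝ} (hr : 0 < r) :
    μ.real (ball x r) = r ^ finrank ℝ E * μ.real (ball 0 1) := by
  rw [measureReal_def, Measure.addHaar_ball_of_pos μ x hr, ENNReal.toReal_mul,
    ENNReal.toReal_ofReal (by positivity), measureReal_def]

theorem equidistribution_gives_uniform_mass_bounds_general
    {G : Type*} [AddGroup G] [AddAction G E] [IsIsometricVAdd G E]
    {D : Set E} (hD : Bornology.IsBounded D) (hGD : ∀ x, ∃ g : G, g +ᵥ x ∈ D)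
    {ι : Type*} {l : Filter ι} (ν : ι → Measure E) [∀ j, IsFiniteMeasureOnCompacts (ν j)]
    [∀ j, VAddInvariantMeasure G E (ν j)] {R₀ : ℝ} (hR₀ : 0 < R₀)
    (hequi : ∀ r, 0 < r → r < R₀ → ∀ x,
      Tendsto (fun j => (ν j).real (ball x r)) l (𝓝 (μ.real (ball x r)))) :
    ∃ K₁ K₂ r₀ : ℝ, 0 < K₁ ∧ 0 < K₂ ∧ 0 < r₀ ∧ ∀ r, 0 < r → r < r₀ → ∀ᶠ j in l, ∀ x,
      K₁ * r ^ finrank ℝ E ≤ (ν j).real (ball x r) ∧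
        (ν j).real (ball x r) ≤ K₂ * r ^ finrank ℝ E := by
  set d := finrank ℝ E
  set V := μ.real (ball 0 1)
  have hV : 0 < V :=
    ENNReal.toReal_pos (measure_ball_pos μ 0 one_pos).ne' measure_ball_lt_top.ne
  refine ⟨V / 2 ^ (d + 1), V * 2 ^ (d + 1), R₀ / 2, by positivity, by positivity, by positivity,
    fun r hr hrR₀ => ?_⟩
  have hinner (c : E) : V / 2 ^ (d + 1) * r ^ d < μ.real (ball c (r / 2)) := calc
    V / 2 ^ (d + 1) * r ^ d = V * r ^ d / 2 ^ d / 2 := by ring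
    _ < V * r ^ d / 2 ^ d := half_lt_self (by positivity)
    _ = μ.real (ball c (r / 2)) := by
      rw [addHaar_real_ball_of_pos μ c (half_pos hr), div_pow]; ring
  have houter (c : E) : μ.real (ball c (2 * r)) < V * 2 ^ (d + 1) * r ^ d := calc
    μ.real (ball c (2 * r)) = V * r ^ d * 2 ^ d := by
      rw [addHaar_real_ball_of_pos μ c (by positivity), mul_pow]; ring
    _ < 2 * (V * r ^ d * 2 ^ d) := lt_two_mul_self (by positivity)
    _ = V * 2 ^ (d + 1) * r ^ d := by ring
  exact eventually_forall_measureReal_ball_mem_Icc hD hGD (half_lt_self hr)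
    (lt_two_mul_self hr)
    (fun c => ((hequi (r / 2) (by linarith) (by linarith) c).eventually_const_lt
      (hinner c)).mono fun _ => le_of_lt)
    (fun c => ((hequi (2 * r) (by linarith) (by linarith) c).eventually_lt_const
      (houter c)).mono fun _ => le_of_lt)

end Haar

section MassMeasure

variable {X : Type*} [MeasurableSpace X]

/-- The mass distribution `ψ² dμ` of a real function `ψ`: its value on a ball is the integral
`∫ ψ²` whose size the equidistribution hypothesis controls. -/
def massMeasure (μ : Measure X) (ψ : X → ℝ) : Measure X :=
  μ.withDensity fun x => ENNReal.ofReal (ψ x ^ 2)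

variable {μ : Measure X} {ψ : X → ℝ}

theorem massMeasure_real_apply (hψ : AEStronglyMeasurable ψ μ) {s : Set X}
    (hs : MeasurableSet s) : (massMeasure μ ψ).real s = ∫ x in s, ψ x ^ 2 ∂μ := by
  rw [massMeasure, measureReal_def, withDensity_apply _ hs,
    integral_eq_lintegral_of_nonneg_ae (ae_of_all _ fun x => sq_nonneg (ψ x))
      (hψ.pow 2).restrict]

theorem vaddInvariantMeasure_massMeasure {G : Type*} [AddGroup G] [AddAction G X]
    [MeasurableConstVAdd G X] [VAddInvariantMeasure G X μ]
    (hψ : ∀ (g : G) (x : X), ψ (g +ᵥ x) = ψ x) :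
    VAddInvariantMeasure G X (massMeasure μ ψ) where
  measure_preimage_vadd g s hs := by
    have hchange := (measurePreserving_vadd g μ).setLIntegral_comp_preimage_emb
      (measurableEmbedding_const_vadd g) (fun x => ENNReal.ofReal (ψ x ^ 2)) s
    rw [massMeasure, withDensity_apply _ hs, withDensity_apply _ (measurable_const_vadd g hs)]
    simpa only [hψ] using hchange

end MassMeasure

section IntegerLattice

/-- The lattice `ℤⁿ` in `ℝⁿ`, as the `ℤ`-span of the standard basis. -/
abbrev integerLattice (n : ℕ) : Submodule ℤ (EuclideanSpace ℝ (Fin n)) :=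
  Submodule.span ℤ (Set.range (EuclideanSpace.basisFun (Fin n) ℝ).toBasis)

instance isIsometricVAdd_integerLattice (n : ℕ) :
    IsIsometricVAdd (integerLattice n) (EuclideanSpace ℝ (Fin n)) :=
  ⟨fun v => isometry_vadd _ (v : EuclideanSpace ℝ (Fin n))⟩

instance vaddInvariantMeasure_integerLattice (n : ℕ) :
    VAddInvariantMeasure (integerLattice n) (EuclideanSpace ℝ (Fin n)) volume :=
  inferInstanceAs <|
    VAddInvariantMeasure (integerLattice n).toAddSubgroup (EuclideanSpace ℝ (Fin n)) volume

theorem ZnPeriodic.map_vadd {n : ℕ} {ψ : EuclideanSpace ℝ (Fin n) → ℝ} (hψ : ZnPeriodic n ψ)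
    (v : integerLattice n) (x : EuclideanSpace ℝ (Fin n)) : ψ (v +ᵥ x) = ψ x := by
  choose k hk using (Basis.mem_span_iff_repr_mem ℤ _ _).mp v.2
  rw [← hψ x k]
  congr 1
  ext i
  have hki : (k i : ℝ) = (v : EuclideanSpace ℝ (Fin n)) i := by simpa using hk i
  simp [Submodule.vadd_def, hki, add_comm]

end IntegerLattice

theorem comap_atTop_le_cofinite {α β : Type*} [Preorder β] [NoMaxOrder β] (u : α → β) :
    comap u atTop ≤ cofinite :=
  le_cofinite_iff_eventually_ne.mpr fun a =>
    ((eventually_gt_atTop (u a)).comap u).mono fun _ hb hba => (hba ▸ hb).false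

theorem equidistribution_gives_uniform_mass_bounds
    (n : ℕ) (hn : 1 ≤ n)
    (ψ : ℕ → EuclideanSpace ℝ (Fin n) → ℝ) (lam : ℕ → ℝ)
    (hsmooth : ∀ j, ContDiff ℝ (⊤ : ℕ∞) (ψ j)) (hper : ∀ j, ZnPeriodic n (ψ j))
    (hnorm : ∀ j, (∫ x in fundDom n, (ψ j x)^2) = 1)
    (hlam : Tendsto lam atTop atTop)
    (R₀ : ℝ) (hR₀ : 0 < R₀)
    (hequi : ∀ r : ℝ, 0 < r → r < R₀ → ∀ x : EuclideanSpace ℝ (Fin n),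
      Tendsto (fun j => ∫ y in Metric.ball x r, (ψ j y)^2) atTop
        (nhds (volume (Metric.ball x r)).toReal)) :
    ∃ K₁ K₂ r₀ : ℝ, 0 < K₁ ∧ 0 < K₂ ∧ 0 < r₀ ∧
      ∀ r : ℝ, 0 < r → r < r₀ → ∃ Λ : ℝ, ∀ j, Λ ≤ lam j →
        ∀ x : EuclideanSpace ℝ (Fin n),
          K₁ * r ^ n ≤ (∫ y in Metric.ball x r, (ψ j y)^2) ∧
          (∫ y in Metric.ball x r, (ψ j y)^2) ≤ K₂ * r ^ n := by
  have hfinite (j : ℕ) : IsLocallyFiniteMeasure (massMeasure volume (ψ j)) :=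
    IsLocallyFiniteMeasure.withDensity_ofReal ((hsmooth j).continuous.pow 2)
  have hinvariant (j : ℕ) : VAddInvariantMeasure (integerLattice n) _ (massMeasure volume (ψ j)) :=
    vaddInvariantMeasure_massMeasure (hper j).map_vadd
  have hmass (j x r) : (massMeasure volume (ψ j)).real (ball x r) =
      ∫ y in ball x r, ψ j y ^ 2 :=
    massMeasure_real_apply (hsmooth j).continuous.aestronglyMeasurable measurableSet_ball
  have hlam_le : comap lam atTop ≤ atTop := Nat.cofinite_eq_atTop ▸ comap_atTop_le_cofinite lam
  have hbounds := equidistribution_gives_uniform_mass_bounds_general volume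
    (ZSpan.fundamentalDomain_isBounded (EuclideanSpace.basisFun (Fin n) ℝ).toBasis)
    (fun x => (ZSpan.exist_unique_vadd_mem_fundamentalDomain _ x).exists)
    (fun j => massMeasure volume (ψ j)) hR₀
    (fun r hr hrR₀ x => by
      simpa only [hmass, measureReal_def volume] using (hequi r hr hrR₀ x).mono_left hlam_le)
  -- A bound for all large `lam j` is an eventuality along `comap lam atTop`.
  simpa only [hmass, finrank_euclideanSpace_fin, (atTop_basis.comap lam).eventually_iff, true_and,
    Set.mem_preimage, Set.mem_Ici] using hbounds
end
end
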